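/- arXiv:2605.18598 — 3 statements merged into one kernel-verified Lean document; each statement's English description precedes it below -/
import Mathlib

section
/- Pointwise Dimension via Reference Subspace (Lemma). Fix integers p ≥ 1 and n ≥ 1, a radius R > 0, and an integer 1 ≤ r ≤ p. Let V̄ ⊆ ℝ^p be an r-dimensional subspace and let π_V̄ be the uniform probability measure on B₂(1.58R) ∩ V̄, i.e. the pushforward, under any linear isometry from ℝ^r onto V̄, of normalized Lebesgue measure on the Euclidean ball of radius 1.58R in ℝ^r. Then for every p×p positive semidefinite matrix G with eigenvalues λ_1 ≥ … ≥ λ_p (nonincreasing, with multiplicity), every w ∈ ℝ^p with ‖w‖₂ ≤ R, and every ε > 0 such that: (a) r = r_eff(G,R,ε), and (b) there exists an r-dimensional subspace V spanned by orthonormal eigenvectors of G corresponding to λ_1,…,λ_r with ‖G^{1/2}(P_V − P_V̄)‖_op ≤ √n·ε/(4R); one has log( 1 / π_V̄( { w' ∈ ℝ^p : (w'−w)ᵀ G (w'−w) ≤ n·ε² } ) ) ≤ (1/2) Σ_{k=1}^{r} log( 40·R²·λ_k / (n·ε²) ). -/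
open MeasureTheory
open scoped ENNReal NNReal Matrix MatrixOrder

noncomputable section

/-- The pointwise dimension `log(1/p)` of a (probability) mass `p`, valued in `[0,∞]`,
with the convention `log(1/0) = ∞`. -/
def negLog (p : ℝ≥0∞) : ℝ≥0∞ :=
  if p = 0 then ⊤ else ENNReal.ofReal (Real.log (1 / p.toReal))

/-- The eigenvalues of a symmetric real matrix, listed in nonincreasing order with
multiplicity (junk value `0` if the matrix is not symmetric). -/
def eigDesc {m : ℕ} (G : Matrix (Fin m) (Fin m) ℝ) : Fin m → ℝ :=
  if h : G.IsHermitian then (fun k => (h.eigenvalues ∘ Tuple.sort h.eigenvalues) k.rev) else 0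

/-- Effective rank `r_eff(G,R,ε) = max{k : λ_k(G)·R² ≥ nε²/2}` (`0` if no such `k`). -/
def rEff {m : ℕ} (G : Matrix (Fin m) (Fin m) ℝ) (R : ℝ) (n : ℕ) (ε : ℝ) : ℕ :=
  (Finset.univ.filter fun k : Fin m => (n : ℝ) * ε ^ 2 / 2 ≤ eigDesc G k * R ^ 2).card

/-- The `ℓ² → ℓ²` operator norm of a real matrix. -/
def opNorm {m k : Type*} [Fintype m] [Fintype k] (M : Matrix m k ℝ) : ℝ :=
  sSup {t | ∃ x : k → ℝ, (∑ j, x j ^ 2) ≤ 1 ∧ t = Real.sqrt (∑ i, (M.mulVec x i) ^ 2)}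

/-- The (matrix of the) orthogonal projection determined by an orthonormal family
`u : Fin r → ℝ^p`, namely `Σ_k u_k u_kᵀ`. -/
def gramProj {p r : ℕ} (u : Fin r → Fin p → ℝ) : Matrix (Fin p) (Fin p) ℝ :=
  Matrix.of fun i j => ∑ k, u k i * u k j

/-- The uniform probability measure on `B₂(1.58 R) ∩ V̄`, where `V̄` is the span of the
orthonormal family `v`: the pushforward, under the induced linear isometry
`ℝ^r → ℝ^p`, of normalized Lebesgue measure on the Euclidean ball of radius `1.58 R`. -/
def refPrior (p r : ℕ) (R : ℝ) (v : Fin r → Fin p → ℝ) : Measure (Fin p → ℝ) :=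
  Measure.map (fun a : Fin r → ℝ => fun i => ∑ k, a k * v k i)
    ((volume {a : Fin r → ℝ | (∑ k, a k ^ 2) ≤ (1.58 * R) ^ 2})⁻¹ •
      volume.restrict {a : Fin r → ℝ | (∑ k, a k ^ 2) ≤ (1.58 * R) ^ 2})


lemma aux_dot_tr {p r : ℕ} (U : Matrix (Fin r) (Fin p) ℝ) (a : Fin r → ℝ) (y : Fin p → ℝ) :
    (Uᵀ *ᵥ a) ⬝ᵥ y = a ⬝ᵥ (U *ᵥ y) := by
  rw [Matrix.mulVec_transpose, Matrix.dotProduct_mulVec]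

lemma aux_cs {m : ℕ} (x y : Fin m → ℝ) : (x ⬝ᵥ y) ^ 2 ≤ (x ⬝ᵥ x) * (y ⬝ᵥ y) := by
  have := Finset.sum_mul_sq_le_sq_mul_sq Finset.univ x y
  simpa [dotProduct, sq] using this

lemma aux_dot_nonneg {m : ℕ} (x : Fin m → ℝ) : 0 ≤ x ⬝ᵥ x :=
  Finset.sum_nonneg fun i _ => mul_self_nonneg (x i)

lemma aux_dot_pos {m : ℕ} (x : Fin m → ℝ) (h : x ⬝ᵥ x ≤ 0) : x = 0 :=
  dotProduct_self_eq_zero.mp (le_antisymm h (aux_dot_nonneg x))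

/-- Pythagoras for an orthonormal family. -/
lemma aux_pyth {p r : ℕ} (U : Matrix (Fin r) (Fin p) ℝ) (hU : U * Uᵀ = 1) (x : Fin p → ℝ) :
    U *ᵥ (x - Uᵀ *ᵥ (U *ᵥ x)) = 0 ∧
    (x - Uᵀ *ᵥ (U *ᵥ x)) ⬝ᵥ (x - Uᵀ *ᵥ (U *ᵥ x)) = x ⬝ᵥ x - (U *ᵥ x) ⬝ᵥ (U *ᵥ x) := by
  have h0 : U *ᵥ (x - Uᵀ *ᵥ (U *ᵥ x)) = 0 := by
    rw [Matrix.mulVec_sub, Matrix.mulVec_mulVec, hU, Matrix.one_mulVec, sub_self]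
  refine ⟨h0, ?_⟩
  conv_lhs => rw [sub_dotProduct]
  rw [aux_dot_tr, h0, dotProduct_zero, sub_zero, dotProduct_sub, dotProduct_comm x (Uᵀ *ᵥ _),
    aux_dot_tr]

lemma aux_bessel {p r : ℕ} (U : Matrix (Fin r) (Fin p) ℝ) (hU : U * Uᵀ = 1) (x : Fin p → ℝ) :
    (U *ᵥ x) ⬝ᵥ (U *ᵥ x) ≤ x ⬝ᵥ x := by
  have := aux_dot_nonneg (x - Uᵀ *ᵥ (U *ᵥ x))
  rw [(aux_pyth U hU x).2] at this
  linarith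

lemma aux_iso {p r : ℕ} (U : Matrix (Fin r) (Fin p) ℝ) (hU : U * Uᵀ = 1) (b : Fin r → ℝ) :
    (Uᵀ *ᵥ b) ⬝ᵥ (Uᵀ *ᵥ b) = b ⬝ᵥ b := by
  rw [aux_dot_tr, Matrix.mulVec_mulVec, hU, Matrix.one_mulVec]

lemma aux_lower_tr {p r : ℕ} (U V : Matrix (Fin r) (Fin p) ℝ) (hU : U * Uᵀ = 1) (hV : V * Vᵀ = 1)
    (hE : ∀ e, V *ᵥ e = 0 → 8 * ((U *ᵥ e) ⬝ᵥ (U *ᵥ e)) ≤ e ⬝ᵥ e) (b : Fin r → ℝ) :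
    7 * (b ⬝ᵥ b) ≤ 8 * (((V * Uᵀ) *ᵥ b) ⬝ᵥ ((V * Uᵀ) *ᵥ b)) := by
  set y := Uᵀ *ᵥ b with hy
  obtain ⟨h0, h1⟩ := aux_pyth V hV y
  set e := y - Vᵀ *ᵥ (V *ᵥ y) with he
  have h2 : (V * Uᵀ) *ᵥ b = V *ᵥ y := by rw [hy, Matrix.mulVec_mulVec]
  have h3 : y ⬝ᵥ y = b ⬝ᵥ b := aux_iso U hU b
  have h4 : e ⬝ᵥ e = b ⬝ᵥ (U *ᵥ e) := by
    have hsub : e ⬝ᵥ e = y ⬝ᵥ e - (Vᵀ *ᵥ (V *ᵥ y)) ⬝ᵥ e := by rw [← sub_dotProduct]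
    rw [hsub, aux_dot_tr V, h0, dotProduct_zero, sub_zero, hy, aux_dot_tr]
  have h5 := aux_cs b (U *ᵥ e)
  have h6 := hE e h0
  rw [← h4] at h5
  have h7 := aux_dot_nonneg b
  have h8 := aux_dot_nonneg e
  rw [h2]
  have h9 : 8 * (e ⬝ᵥ e) ≤ b ⬝ᵥ b := by
    by_contra hc
    push Not at hc
    have hpos : 0 < e ⬝ᵥ e := by linarith
    nlinarith [mul_le_mul_of_nonneg_left h6 h7]
  linarith

lemma aux_lower {p r : ℕ} (U V : Matrix (Fin r) (Fin p) ℝ) (hU : U * Uᵀ = 1) (hV : V * Vᵀ = 1)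
    (hE : ∀ e, V *ᵥ e = 0 → 8 * ((U *ᵥ e) ⬝ᵥ (U *ᵥ e)) ≤ e ⬝ᵥ e) :
    IsUnit (U * Vᵀ) ∧ ∀ a : Fin r → ℝ,
    7 * (a ⬝ᵥ a) ≤ 8 * (((U * Vᵀ) *ᵥ a) ⬝ᵥ ((U * Vᵀ) *ᵥ a)) := by
  have hl := aux_lower_tr U V hU hV hE
  have htr : (U * Vᵀ)ᵀ = V * Uᵀ := by simp [Matrix.transpose_mul]
  have hinj : Function.Injective ((V * Uᵀ).mulVec) := by
    intro x y hxy
    have h := hl (x - y)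
    rw [Matrix.mulVec_sub, sub_eq_zero.mpr hxy, dotProduct_zero] at h
    exact sub_eq_zero.mp (aux_dot_pos _ (by linarith))
  have hunit : IsUnit (V * Uᵀ) := Matrix.mulVec_injective_iff_isUnit.mp hinj
  refine ⟨?_, ?_⟩
  · rw [← htr, Matrix.isUnit_transpose] at hunit
    exact hunit
  intro a
  obtain ⟨b, hb⟩ := Matrix.mulVec_surjective_iff_isUnit.mpr hunit a
  have h1 := hl b
  rw [hb] at h1
  have h2 : a ⬝ᵥ a = b ⬝ᵥ ((U * Vᵀ) *ᵥ a) := by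
    conv_lhs => rw [← hb, ← htr, aux_dot_tr, htr, hb]
  have h3 := aux_cs b ((U * Vᵀ) *ᵥ a)
  rw [← h2] at h3
  set X := a ⬝ᵥ a
  set Y := ((U * Vᵀ) *ᵥ a) ⬝ᵥ ((U * Vᵀ) *ᵥ a) with hY
  have hX : 0 ≤ X := aux_dot_nonneg a
  have hY0 : 0 ≤ Y := aux_dot_nonneg _
  by_contra hc
  push Not at hc
  have hpos : 0 < X := by linarith
  nlinarith [mul_le_mul_of_nonneg_right h1 hY0]

/-- The determinant of a product of two orthonormal frames is at most one. -/
lemma aux_det {p r : ℕ} (U V : Matrix (Fin r) (Fin p) ℝ) (hU : U * Uᵀ = 1) (hV : V * Vᵀ = 1)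
    (hunit : IsUnit (U * Vᵀ)) (D : Set (Fin r → ℝ)) (ρ : ℝ) (hD : D = {a | a ⬝ᵥ a ≤ ρ})
    (h0 : volume D ≠ 0) (h1 : volume D ≠ ⊤) : |(U * Vᵀ).det| ≤ 1 := by
  have hdet : LinearMap.det (Matrix.toLin' (U * Vᵀ)) ≠ 0 := by
    rw [LinearMap.det_toLin']
    exact ((Matrix.isUnit_iff_isUnit_det _).mp hunit).ne_zero
  have hpos : 0 < |(U * Vᵀ).det| := by
    rw [LinearMap.det_toLin'] at hdet
    exact abs_pos.mpr hdet
  have h2 := Measure.addHaar_preimage_linearMap (volume : Measure (Fin r → ℝ)) hdet D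
  have hsub : D ⊆ (Matrix.toLin' (U * Vᵀ)) ⁻¹' D := by
    intro a ha
    rw [hD] at ha ⊢
    simp only [Set.mem_ofPred_eq, Set.mem_preimage, Matrix.toLin'_apply] at ha ⊢
    rw [← Matrix.mulVec_mulVec]
    have := aux_bessel U hU (Vᵀ *ᵥ a)
    rw [aux_iso V hV] at this
    linarith
  have h3 := measure_mono (μ := (volume : Measure (Fin r → ℝ))) hsub
  rw [h2, LinearMap.det_toLin'] at h3
  have h4 : (1 : ℝ≥0∞) ≤ ENNReal.ofReal |((U * Vᵀ).det)⁻¹| := by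
    by_contra hc
    push Not at hc
    have := ENNReal.mul_lt_mul_left h0 h1 hc
    rw [one_mul] at this
    exact absurd h3 (not_le.mpr this)
  rw [ENNReal.one_le_ofReal, abs_inv] at h4
  exact (one_le_inv₀ hpos).mp h4

lemma aux_opNorm {p : ℕ} (G A : Matrix (Fin p) (Fin p) ℝ) (hG : G.PosSemidef) (κ : ℝ)
    (hκ : opNorm (CFC.sqrt G * A) ≤ κ) (x : Fin p → ℝ) :
    (A *ᵥ x) ⬝ᵥ (G *ᵥ (A *ᵥ x)) ≤ κ ^ 2 * (x ⬝ᵥ x) := by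
  have h0 : 0 ≤ G := Matrix.nonneg_iff_posSemidef.mpr hG
  have h1 : 0 ≤ CFC.sqrt G := CFC.sqrt_nonneg _
  have hS := CFC.sqrt_mul_sqrt_self G h0
  have hH : (CFC.sqrt G)ᵀ = CFC.sqrt G := by
    have := (Matrix.nonneg_iff_posSemidef.mp h1).1
    simpa [Matrix.IsHermitian] using this
  set S := CFC.sqrt G
  have hq : ∀ y : Fin p → ℝ, y ⬝ᵥ (G *ᵥ y) = (S *ᵥ y) ⬝ᵥ (S *ᵥ y) := by
    intro y
    rw [← hS, ← Matrix.mulVec_mulVec]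
    conv_rhs => rw [← hH, aux_dot_tr, hH]
  rw [hq, Matrix.mulVec_mulVec]
  set B := S * A
  have hbdd : BddAbove {t | ∃ x : Fin p → ℝ, (∑ j, x j ^ 2) ≤ 1 ∧
      t = Real.sqrt (∑ i, (B.mulVec x i) ^ 2)} := by
    refine ⟨Real.sqrt (∑ i, ∑ j, B i j ^ 2), ?_⟩
    rintro t ⟨x, hx, rfl⟩
    apply Real.sqrt_le_sqrt
    refine Finset.sum_le_sum fun i _ => ?_
    have := Finset.sum_mul_sq_le_sq_mul_sq Finset.univ (B i) x
    have h2 : 0 ≤ ∑ j, B i j ^ 2 := Finset.sum_nonneg fun j _ => sq_nonneg _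
    simp only [Matrix.mulVec, dotProduct]
    nlinarith
  have key : ∀ y : Fin p → ℝ, y ⬝ᵥ y ≤ 1 → (B *ᵥ y) ⬝ᵥ (B *ᵥ y) ≤ κ ^ 2 := by
    intro y hy
    have h2 : Real.sqrt (∑ i, (B.mulVec y i) ^ 2) ≤ κ :=
      le_trans (le_csSup hbdd ⟨y, by simpa [dotProduct, sq] using hy, rfl⟩) hκ
    have h3 : 0 ≤ ∑ i, (B.mulVec y i) ^ 2 := Finset.sum_nonneg fun j _ => sq_nonneg _
    have h4 : (B *ᵥ y) ⬝ᵥ (B *ᵥ y) = ∑ i, (B.mulVec y i) ^ 2 := by simp [dotProduct, sq]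
    rw [h4, ← Real.sq_sqrt h3]
    exact pow_le_pow_left₀ (Real.sqrt_nonneg _) h2 2
  by_cases hx : x ⬝ᵥ x ≤ 0
  · rw [aux_dot_pos x hx]; simp
  · push Not at hx
    have h2 := key ((Real.sqrt (x ⬝ᵥ x))⁻¹ • x) (by
      rw [smul_dotProduct, dotProduct_smul, smul_eq_mul, smul_eq_mul, ← mul_assoc, ← mul_inv,
        Real.mul_self_sqrt hx.le, inv_mul_cancel₀ hx.ne'])
    rw [Matrix.mulVec_smul, smul_dotProduct, dotProduct_smul, smul_eq_mul, smul_eq_mul,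
      ← mul_assoc, ← mul_inv, Real.mul_self_sqrt hx.le, inv_mul_le_iff₀ hx] at h2
    linarith

lemma aux_eig {p : ℕ} (G : Matrix (Fin p) (Fin p) ℝ) (hG : G.IsHermitian) :
    Antitone (eigDesc G) ∧ ∀ t : ℝ, (Finset.univ.filter fun i => t ≤ hG.eigenvalues i).card =
      (Finset.univ.filter fun k => t ≤ eigDesc G k).card := by
  have h : eigDesc G = fun k => (hG.eigenvalues ∘ Tuple.sort hG.eigenvalues) k.rev := by
    rw [eigDesc, dif_pos hG]
  rw [h]
  refine ⟨?_, ?_⟩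
  · intro a b hab
    exact Tuple.monotone_sort hG.eigenvalues (Fin.rev_le_rev.mpr hab)
  · intro t
    symm
    refine Finset.card_equiv (Fin.revPerm.trans (Tuple.sort hG.eigenvalues)) ?_
    intro i
    simp

lemma aux_top {p r : ℕ} (hrp : r ≤ p) (f : Fin p → ℝ) (hf : Antitone f) (t : ℝ)
    (hr : r = (Finset.univ.filter fun k => t ≤ f k).card) (k : Fin r) :
    t ≤ f (Fin.castLE hrp k) := by
  by_contra hc
  push Not at hc
  have : (Finset.univ.filter fun k => t ≤ f k) ⊆ Finset.Iio (Fin.castLE hrp k) := by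
    intro j hj
    simp only [Finset.mem_filter, Finset.mem_univ, true_and, Finset.mem_Iio] at hj ⊢
    by_contra hh
    have := hf (not_lt.mp hh)
    linarith
  have h2 := Finset.card_le_card this
  rw [← hr, Fin.card_Iio] at h2
  simp at h2
  have := k.2
  omega

lemma aux_spec {p r : ℕ} (G : Matrix (Fin p) (Fin p) ℝ) (hG : G.IsHermitian) (t : ℝ)
    (ht : (Finset.univ.filter fun i => t ≤ hG.eigenvalues i).card = r)
    (u : Fin r → Fin p → ℝ) (hu : ∀ k l, (u k) ⬝ᵥ (u l) = if k = l then (1 : ℝ) else 0)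
    (lam : Fin r → ℝ) (hlam : ∀ k, t ≤ lam k) (hGu : ∀ k, G *ᵥ (u k) = lam k • u k)
    (y : Fin p → ℝ) (hy : ∀ k, u k ⬝ᵥ y = 0) :
    y ⬝ᵥ (G *ᵥ y) ≤ t * (y ⬝ᵥ y) := by
  classical
  have hT : Gᵀ = G := by simpa [Matrix.IsHermitian] using hG
  set e := hG.eigenvectorBasis with he
  let E : Fin p → Fin p → ℝ := fun i => (e i).ofLp
  have hE : ∀ i, G *ᵥ E i = hG.eigenvalues i • E i := fun i => hG.mulVec_eigenvectorBasis i
  have hin : ∀ i (x : Fin p → ℝ), inner ℝ (e i) (WithLp.toLp 2 x) = E i ⬝ᵥ x := by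
    intro i x
    have := EuclideanSpace.inner_toLp_toLp (𝕜 := ℝ) (E i) x
    rw [dotProduct_comm]
    simpa [E] using this
  have hsym : ∀ a b : Fin p → ℝ, a ⬝ᵥ (G *ᵥ b) = (G *ᵥ a) ⬝ᵥ b := by
    intro a b
    conv_rhs => rw [← hT, aux_dot_tr]
  have hpars : ∀ a b : Fin p → ℝ, a ⬝ᵥ b = ∑ i, (E i ⬝ᵥ a) * (E i ⬝ᵥ b) := by
    intro a b
    have h := e.sum_inner_mul_inner (WithLp.toLp 2 a) (WithLp.toLp 2 b)
    rw [EuclideanSpace.inner_toLp_toLp] at h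
    simp only [star_trivial] at h
    rw [dotProduct_comm, ← h]
    refine Finset.sum_congr rfl fun i _ => ?_
    rw [hin, real_inner_comm, hin]
  set I := Finset.univ.filter fun i => t ≤ hG.eigenvalues i with hI
  let fE : I → EuclideanSpace ℝ (Fin p) := fun i => e i
  let fu : Fin r → EuclideanSpace ℝ (Fin p) := fun k => WithLp.toLp 2 (u k)
  have hliE : LinearIndependent ℝ fE :=
    (e.orthonormal.comp (fun i : I => (i : Fin p)) Subtype.val_injective).linearIndependent
  have hliu : LinearIndependent ℝ fu := by
    apply Orthonormal.linearIndependent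
    rw [orthonormal_iff_ite]
    intro k l
    rw [EuclideanSpace.inner_toLp_toLp, star_trivial, dotProduct_comm]
    exact hu k l
  have hle : Submodule.span ℝ (Set.range fu) ≤ Submodule.span ℝ (Set.range fE) := by
    rw [Submodule.span_le]
    rintro _ ⟨k, rfl⟩
    have h := e.sum_repr' (fu k)
    rw [← h]
    refine Submodule.sum_mem _ fun i _ => ?_
    by_cases hi : i ∈ I
    · exact Submodule.smul_mem _ _ (Submodule.subset_span ⟨⟨i, hi⟩, rfl⟩)
    · have : inner ℝ (e i) (fu k) = 0 := by
        rw [hin]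
        have h1 := hsym (E i) (u k)
        rw [hGu, hE, dotProduct_smul, smul_dotProduct, smul_eq_mul, smul_eq_mul] at h1
        have h2 : hG.eigenvalues i < t := by
          simpa [hI] using hi
        have h3 := hlam k
        have h4 : (lam k - hG.eigenvalues i) * (E i ⬝ᵥ u k) = 0 := by linarith
        rcases mul_eq_zero.mp h4 with h5 | h5
        · linarith
        · exact h5
      rw [this, zero_smul]
      exact Submodule.zero_mem _
  have heq := Submodule.eq_of_le_of_finrank_eq hle (by
    rw [finrank_span_eq_card hliE, finrank_span_eq_card hliu, Fintype.card_coe, ht,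
      Fintype.card_fin])
  have hzero : ∀ i ∈ I, E i ⬝ᵥ y = 0 := by
    intro i hi
    have hmem : e i ∈ Submodule.span ℝ (Set.range fu) := by
      rw [heq]
      exact Submodule.subset_span ⟨⟨i, hi⟩, rfl⟩
    rw [← hin]
    refine Submodule.span_induction (p := fun x _ => inner ℝ x (WithLp.toLp 2 y) = (0 : ℝ))
      ?_ ?_ ?_ ?_ hmem
    · rintro _ ⟨k, rfl⟩
      rw [EuclideanSpace.inner_toLp_toLp, star_trivial, dotProduct_comm]
      exact hy k
    · simp
    · intro a b _ _ ha hb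
      rw [inner_add_left, ha, hb, add_zero]
    · intro c a _ ha
      rw [inner_smul_left, ha, mul_zero]
  rw [hpars y (G *ᵥ y), hpars y y, Finset.mul_sum]
  refine Finset.sum_le_sum fun i _ => ?_
  rw [hsym, hE, smul_dotProduct, smul_eq_mul]
  by_cases hi : i ∈ I
  · rw [hzero i hi]; simp
  · have h2 : hG.eigenvalues i < t := by
      simpa [hI] using hi
    nlinarith [mul_self_nonneg (E i ⬝ᵥ y)]

lemma aux_qadd {p : ℕ} (G : Matrix (Fin p) (Fin p) ℝ) (hG : G.PosSemidef) (x y : Fin p → ℝ) :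
    (x - y) ⬝ᵥ (G *ᵥ (x - y)) ≤ 3 * (x ⬝ᵥ (G *ᵥ x)) + 3 / 2 * (y ⬝ᵥ (G *ᵥ y)) := by
  have h : 0 ≤ ((2 : ℝ) • x + y) ⬝ᵥ (G *ᵥ ((2 : ℝ) • x + y)) := by
    have := hG.dotProduct_mulVec_nonneg ((2 : ℝ) • x + y)
    simpa using this
  simp only [Matrix.mulVec_add, Matrix.mulVec_sub, Matrix.mulVec_smul, add_dotProduct,
    sub_dotProduct, dotProduct_add, dotProduct_sub, smul_dotProduct, dotProduct_smul,
    smul_eq_mul] at h ⊢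
  linarith

lemma aux_nadd {m : ℕ} (x y : Fin m → ℝ) :
    (x + y) ⬝ᵥ (x + y) ≤ 3 / 2 * (x ⬝ᵥ x) + 3 * (y ⬝ᵥ y) := by
  have h := aux_dot_nonneg (x - (2 : ℝ) • y)
  have hc := dotProduct_comm x y
  simp only [add_dotProduct,
    sub_dotProduct, dotProduct_add, dotProduct_sub, smul_dotProduct, dotProduct_smul,
    smul_eq_mul] at h ⊢
  linarith

lemma aux_q_split {p r : ℕ} (G : Matrix (Fin p) (Fin p) ℝ) (hT : Gᵀ = G)
    (U : Matrix (Fin r) (Fin p) ℝ) (hU : U * Uᵀ = 1) (lam : Fin r → ℝ)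
    (hGU : G * Uᵀ = Uᵀ * Matrix.diagonal lam) (b : Fin r → ℝ) (y : Fin p → ℝ)
    (hy : U *ᵥ y = 0) :
    (Uᵀ *ᵥ b + y) ⬝ᵥ (G *ᵥ (Uᵀ *ᵥ b + y)) = (∑ j, lam j * b j ^ 2) + y ⬝ᵥ (G *ᵥ y) := by
  have h1 : G *ᵥ (Uᵀ *ᵥ b) = Uᵀ *ᵥ (Matrix.diagonal lam *ᵥ b) := by
    rw [Matrix.mulVec_mulVec, hGU, ← Matrix.mulVec_mulVec]
  have h2 : (Uᵀ *ᵥ b) ⬝ᵥ (G *ᵥ y) = 0 := by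
    rw [← aux_dot_tr, hT, h1, aux_dot_tr, hy, dotProduct_zero]
  have h3 : y ⬝ᵥ (Uᵀ *ᵥ (Matrix.diagonal lam *ᵥ b)) = 0 := by
    rw [dotProduct_comm, aux_dot_tr, hy, dotProduct_zero]
  rw [Matrix.mulVec_add, add_dotProduct, dotProduct_add, dotProduct_add, h2, h1, h3, aux_dot_tr,
    Matrix.mulVec_mulVec, hU, Matrix.one_mulVec]
  have h4 : b ⬝ᵥ (Matrix.diagonal lam *ᵥ b) = ∑ j, lam j * b j ^ 2 := by
    simp only [dotProduct, Matrix.mulVec_diagonal]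
    exact Finset.sum_congr rfl fun j _ => by ring
  rw [h4]; ring

lemma aux_hE {p r : ℕ} (G : Matrix (Fin p) (Fin p) ℝ) (hT : Gᵀ = G)
    (U V : Matrix (Fin r) (Fin p) ℝ) (hU : U * Uᵀ = 1)
    (lam : Fin r → ℝ) (hGU : G * Uᵀ = Uᵀ * Matrix.diagonal lam)
    (κ : ℝ) (hκ : 0 < κ) (hlam : ∀ j, 8 * κ ≤ lam j)
    (hA : ∀ x, ((Uᵀ * U - Vᵀ * V) *ᵥ x) ⬝ᵥ (G *ᵥ ((Uᵀ * U - Vᵀ * V) *ᵥ x)) ≤ κ * (x ⬝ᵥ x))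
    (e : Fin p → ℝ) (he : V *ᵥ e = 0) : 8 * ((U *ᵥ e) ⬝ᵥ (U *ᵥ e)) ≤ e ⬝ᵥ e := by
  have h1 := hA e
  have h2 : (Uᵀ * U - Vᵀ * V) *ᵥ e = Uᵀ *ᵥ (U *ᵥ e) + 0 := by
    rw [Matrix.sub_mulVec, ← Matrix.mulVec_mulVec, ← Matrix.mulVec_mulVec, he, Matrix.mulVec_zero,
      sub_zero, add_zero]
  rw [h2, aux_q_split G hT U hU lam hGU _ 0 (by simp)] at h1
  have h3 : 8 * κ * ((U *ᵥ e) ⬝ᵥ (U *ᵥ e)) ≤ ∑ j, lam j * (U *ᵥ e) j ^ 2 := by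
    rw [dotProduct, Finset.mul_sum]
    refine Finset.sum_le_sum fun j _ => ?_
    nlinarith [hlam j, sq_nonneg ((U *ᵥ e) j)]
  simp only [zero_dotProduct, add_zero] at h1
  nlinarith

lemma aux_point {p r : ℕ} (G : Matrix (Fin p) (Fin p) ℝ) (hG : G.PosSemidef) (hT : Gᵀ = G)
    (U V : Matrix (Fin r) (Fin p) ℝ) (hU : U * Uᵀ = 1) (hV : V * Vᵀ = 1)
    (lam : Fin r → ℝ) (hGU : G * Uᵀ = Uᵀ * Matrix.diagonal lam)
    (κ R : ℝ) (hκ : 0 < κ) (hlam : ∀ j, 8 * κ ≤ lam j)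
    (hA : ∀ x, ((Uᵀ * U - Vᵀ * V) *ᵥ x) ⬝ᵥ (G *ᵥ ((Uᵀ * U - Vᵀ * V) *ᵥ x)) ≤ κ * (x ⬝ᵥ x))
    (hperp : ∀ y, U *ᵥ y = 0 → y ⬝ᵥ (G *ᵥ y) ≤ 8 * κ * (y ⬝ᵥ y))
    (w : Fin p → ℝ) (hw : w ⬝ᵥ w ≤ R ^ 2)
    (c : Fin r → ℝ) (hc : (U * Vᵀ) *ᵥ c = U *ᵥ w)
    (hM : ∀ a : Fin r → ℝ, 7 * (a ⬝ᵥ a) ≤ 8 * (((U * Vᵀ) *ᵥ a) ⬝ᵥ ((U * Vᵀ) *ᵥ a)))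
    (z : Fin r → ℝ) (hz : ∑ j, lam j * ((U * Vᵀ) *ᵥ z) j ^ 2 ≤ κ * R ^ 2) :
    (c + z) ⬝ᵥ (c + z) ≤ (1.58 * R) ^ 2 ∧
    (Vᵀ *ᵥ (c + z) - w) ⬝ᵥ (G *ᵥ (Vᵀ *ᵥ (c + z) - w)) ≤ 16 * κ * R ^ 2 := by
  have h1 := hM c
  rw [hc] at h1
  have h2 := hM z
  have h3 : 8 * κ * (((U * Vᵀ) *ᵥ z) ⬝ᵥ ((U * Vᵀ) *ᵥ z)) ≤ κ * R ^ 2 := by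
    refine le_trans ?_ hz
    rw [dotProduct, Finset.mul_sum]
    refine Finset.sum_le_sum fun j _ => ?_
    nlinarith [hlam j, sq_nonneg (((U * Vᵀ) *ᵥ z) j)]
  have h4 : 8 * (((U * Vᵀ) *ᵥ z) ⬝ᵥ ((U * Vᵀ) *ᵥ z)) ≤ R ^ 2 := by
    by_contra hcon
    push Not at hcon
    nlinarith
  have h5 := aux_nadd c z
  have h6 := aux_bessel U hU w
  have h6n := aux_dot_nonneg (U *ᵥ w)
  set β := (U *ᵥ w) ⬝ᵥ (U *ᵥ w) with hβ
  set a := c + z with ha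
  have h7 : a ⬝ᵥ a ≤ 12 / 7 * β + 3 / 7 * R ^ 2 := by linarith
  refine ⟨by nlinarith, ?_⟩
  set x := Vᵀ *ᵥ a with hx
  have hxx : x ⬝ᵥ x = a ⬝ᵥ a := aux_iso V hV a
  have h8 : V *ᵥ x = a := by rw [hx, Matrix.mulVec_mulVec, hV, Matrix.one_mulVec]
  obtain ⟨p1, p2⟩ := aux_pyth U hU w
  obtain ⟨p3, -⟩ := aux_pyth U hU x
  have hUx : U *ᵥ x = U *ᵥ w + (U * Vᵀ) *ᵥ z := by
    rw [hx, Matrix.mulVec_mulVec, ha, Matrix.mulVec_add, hc]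
  set w₂ := w - Uᵀ *ᵥ (U *ᵥ w) with hw₂
  set x₂ := x - Uᵀ *ᵥ (U *ᵥ x) with hx₂
  have hdec : x - w = Uᵀ *ᵥ ((U * Vᵀ) *ᵥ z) + (x₂ - w₂) := by
    rw [hx₂, hUx, Matrix.mulVec_add, hw₂]
    abel
  have hAx : (Uᵀ * U - Vᵀ * V) *ᵥ x = -x₂ := by
    rw [Matrix.sub_mulVec, ← Matrix.mulVec_mulVec, ← Matrix.mulVec_mulVec, h8, ← hx, hx₂]
    abel
  have q1 := hA x
  rw [hAx, hxx, Matrix.mulVec_neg, neg_dotProduct, dotProduct_neg, neg_neg] at q1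
  have q2 := hperp w₂ p1
  rw [p2] at q2
  have q3 := aux_qadd G hG x₂ w₂
  rw [hdec, aux_q_split G hT U hU lam hGU _ (x₂ - w₂) (by rw [Matrix.mulVec_sub, p1, p3, sub_zero])]
  have q4 : κ * (a ⬝ᵥ a) ≤ κ * (12 / 7 * β + 3 / 7 * R ^ 2) := mul_le_mul_of_nonneg_left h7 hκ.le
  have q5 : κ * (w ⬝ᵥ w) ≤ κ * R ^ 2 := mul_le_mul_of_nonneg_left hw hκ.le
  have q6 : 0 ≤ κ * β := mul_nonneg hκ.le h6n
  have q7 : 0 ≤ κ * R ^ 2 := mul_nonneg hκ.le (sq_nonneg _)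
  nlinarith

lemma aux_ball {r : ℕ} (ρ : ℝ) (hρ : 0 < ρ) :
    volume {a : Fin r → ℝ | (∑ k, a k ^ 2) ≤ ρ ^ 2} ≠ 0 ∧
    volume {a : Fin r → ℝ | (∑ k, a k ^ 2) ≤ ρ ^ 2} ≠ ⊤ ∧
    MeasurableSet {a : Fin r → ℝ | (∑ k, a k ^ 2) ≤ ρ ^ 2} := by
  have hcont : Continuous fun a : Fin r → ℝ => ∑ k, a k ^ 2 := by fun_prop
  refine ⟨?_, ?_, (isClosed_le hcont continuous_const).measurableSet⟩
  · have ho : IsOpen {a : Fin r → ℝ | (∑ k, a k ^ 2) < ρ ^ 2} := isOpen_lt hcont continuous_const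
    have hne : {a : Fin r → ℝ | (∑ k, a k ^ 2) < ρ ^ 2}.Nonempty := ⟨0, by simp; positivity⟩
    have := ho.measure_pos volume hne
    exact (lt_of_lt_of_le this (measure_mono fun a (ha : (∑ k, a k ^ 2) < ρ ^ 2) => show (∑ k, a k ^ 2) ≤ ρ ^ 2 from ha.le)).ne'
  · refine ((measure_mono ?_).trans_lt (measure_closedBall_lt_top (x := (0 : Fin r → ℝ)) (r := ρ))).ne
    intro a ha
    rw [mem_closedBall_zero_iff, pi_norm_le_iff_of_nonneg hρ.le]
    intro i
    have h1 : a i ^ 2 ≤ ∑ k, a k ^ 2 :=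
      Finset.single_le_sum (f := fun k => a k ^ 2) (fun k _ => sq_nonneg _) (Finset.mem_univ i)
    exact abs_le_of_sq_le_sq (h1.trans ha) hρ.le

lemma aux_negLog (m : ℝ≥0∞) (d : ℝ) (hd : 0 < d) (h : ENNReal.ofReal d⁻¹ ≤ m) :
    negLog m ≤ ENNReal.ofReal (Real.log d) := by
  have hdi : 0 < d⁻¹ := inv_pos.mpr hd
  have hm : m ≠ 0 := (lt_of_lt_of_le (ENNReal.ofReal_pos.mpr hdi) h).ne'
  rw [negLog, if_neg hm]
  by_cases ht : m = ⊤
  · simp [ht]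
  · apply ENNReal.ofReal_le_ofReal
    have h1 : d⁻¹ ≤ m.toReal := (ENNReal.ofReal_le_iff_le_toReal ht).mp h
    apply Real.log_le_log (one_div_pos.mpr (hdi.trans_le h1))
    rw [one_div]
    exact (inv_le_comm₀ hd (hdi.trans_le h1)).mp h1

/-- **Pointwise Dimension via Reference Subspace (Lemma).** -/
theorem pointwise_dimension_via_reference_subspace
    (p n r : ℕ) (hp : 1 ≤ p) (hn : 1 ≤ n) (hr : 1 ≤ r) (hrp : r ≤ p)
    (R : ℝ) (hR : 0 < R)
    -- `V̄` is given by an orthonormal family `v` spanning it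
    (v : Fin r → Fin p → ℝ)
    (hv : ∀ k l, (v k) ⬝ᵥ (v l) = if k = l then (1 : ℝ) else 0)
    (G : Matrix (Fin p) (Fin p) ℝ) (hG : G.PosSemidef)
    (w : Fin p → ℝ) (hw : (∑ i, w i ^ 2) ≤ R ^ 2)
    (ε : ℝ) (hε : 0 < ε)
    -- (a) `r` is the effective rank of `G`
    (ha : r = rEff G R n ε)
    -- (b) some top-`r` eigenspace `V` of `G` is approximated by `V̄` to the required precision
    (hb : ∃ u : Fin r → Fin p → ℝ,
      (∀ k l, (u k) ⬝ᵥ (u l) = if k = l then (1 : ℝ) else 0) ∧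
      (∀ k : Fin r, G.mulVec (u k) = eigDesc G (Fin.castLE hrp k) • u k) ∧
      opNorm (CFC.sqrt G * (gramProj u - gramProj v)) ≤ Real.sqrt n * ε / (4 * R)) :
    negLog (refPrior p r R v {w' | (w' - w) ⬝ᵥ G.mulVec (w' - w) ≤ n * ε ^ 2}) ≤
      ENNReal.ofReal ((1 / 2) * ∑ k : Fin r,
        Real.log (40 * R ^ 2 * eigDesc G (Fin.castLE hrp k) / (n * ε ^ 2))) := by
  obtain ⟨u, hu, hGu, hop⟩ := hb
  have hn0 : (0 : ℝ) < n := by exact_mod_cast hn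
  have hT : Gᵀ = G := by simpa [Matrix.IsHermitian] using hG.1
  set lam : Fin r → ℝ := fun k => eigDesc G (Fin.castLE hrp k) with hlam
  set δ : ℝ := n * ε ^ 2 with hδ
  have hδ0 : 0 < δ := by positivity
  set κ : ℝ := δ / (16 * R ^ 2) with hκdef
  have hκ : 0 < κ := by positivity
  have hκR : κ * R ^ 2 = δ / 16 := by rw [hκdef]; field_simp
  -- effective rank
  obtain ⟨hanti, hcard⟩ := aux_eig G hG.1
  have hset : ∀ k, ((n : ℝ) * ε ^ 2 / 2 ≤ eigDesc G k * R ^ 2 ↔ 8 * κ ≤ eigDesc G k) := by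
    intro k
    have hR2 : 0 < R ^ 2 := by positivity
    rw [← hδ]
    have : δ / 2 = 8 * κ * R ^ 2 := by linarith
    rw [this, mul_le_mul_iff_left₀ hR2]
  have hrc : r = (Finset.univ.filter fun k => 8 * κ ≤ eigDesc G k).card := by
    rw [rEff] at ha
    simp only [hset] at ha
    exact ha
  have hlamt : ∀ k, 8 * κ ≤ lam k := fun k => aux_top hrp _ hanti _ hrc k
  -- matrices of the two frames
  set U : Matrix (Fin r) (Fin p) ℝ := Matrix.of u with hUdef
  set V : Matrix (Fin r) (Fin p) ℝ := Matrix.of v with hVdef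
  have hU : U * Uᵀ = 1 := by
    ext k l
    rw [Matrix.one_apply]
    exact hu k l
  have hV : V * Vᵀ = 1 := by
    ext k l
    rw [Matrix.one_apply]
    exact hv k l
  have hgu : gramProj u = Uᵀ * U := rfl
  have hgv : gramProj v = Vᵀ * V := rfl
  have hGU : G * Uᵀ = Uᵀ * Matrix.diagonal lam := by
    ext i k
    rw [Matrix.mul_diagonal]
    have := congrFun (hGu k) i
    rw [Pi.smul_apply, smul_eq_mul, mul_comm] at this
    exact this
  have hA : ∀ x, ((Uᵀ * U - Vᵀ * V) *ᵥ x) ⬝ᵥ (G *ᵥ ((Uᵀ * U - Vᵀ * V) *ᵥ x)) ≤ κ * (x ⬝ᵥ x) := by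
    intro x
    rw [hgu, hgv] at hop
    have h := aux_opNorm G _ hG _ hop x
    have hk : (Real.sqrt n * ε / (4 * R)) ^ 2 = κ := by
      rw [div_pow, mul_pow, Real.sq_sqrt hn0.le, mul_pow, hκdef, hδ]
      norm_num
    rwa [hk] at h
  have hperp : ∀ y, U *ᵥ y = 0 → y ⬝ᵥ (G *ᵥ y) ≤ 8 * κ * (y ⬝ᵥ y) := by
    intro y hy
    exact aux_spec G hG.1 (8 * κ) ((hcard _).trans hrc.symm) u hu lam hlamt hGu y
      (fun k => congrFun hy k)
  have hww : w ⬝ᵥ w ≤ R ^ 2 := by simpa [dotProduct, sq] using hw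
  obtain ⟨hunit, hM⟩ := aux_lower U V hU hV (aux_hE G hT U V hU lam hGU κ hκ hlamt hA)
  obtain ⟨c, hc⟩ := Matrix.mulVec_surjective_iff_isUnit.mpr hunit (U *ᵥ w)
  have hpoint := aux_point G hG hT U V hU hV lam hGU κ R hκ hlamt hA hperp w hww c hc hM
  -- volumes
  obtain ⟨hB0, hBt, hBm⟩ := aux_ball (r := r) (1.58 * R) (by positivity)
  set D : Set (Fin r → ℝ) := {a | (∑ k, a k ^ 2) ≤ (1.58 * R) ^ 2} with hD
  have hdetM := aux_det U V hU hV hunit D ((1.58 * R) ^ 2)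
    (by rw [hD]; ext a; simp [dotProduct, sq]) hB0 hBt
  have hdetM0 : 0 < |(U * Vᵀ).det| :=
    abs_pos.mpr ((Matrix.isUnit_iff_isUnit_det _).mp hunit).ne_zero
  have hlam0 : ∀ k, 0 < lam k := fun k => lt_of_lt_of_le (by positivity) (hlamt k)
  set q : Fin r → ℝ := fun j => lam j * (1.58 * R) ^ 2 * 16 / δ with hq
  have hq0 : ∀ j, 0 < q j := fun j => by have := hlam0 j; rw [hq]; positivity
  set L := Matrix.diagonal (fun j => Real.sqrt (q j)) * (U * Vᵀ) with hL
  have hprod : 0 < ∏ j, Real.sqrt (q j) :=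
    Finset.prod_pos fun j _ => Real.sqrt_pos.mpr (hq0 j)
  have hdetL : |L.det| = (∏ j, Real.sqrt (q j)) * |(U * Vᵀ).det| := by
    rw [hL, Matrix.det_mul, Matrix.det_diagonal, abs_mul, abs_of_pos hprod]
  have hdetL0 : 0 < |L.det| := by rw [hdetL]; positivity
  have hLlin : LinearMap.det (Matrix.toLin' L) ≠ 0 := by
    rw [LinearMap.det_toLin']; exact abs_pos.mp hdetL0
  have hvol := Measure.addHaar_preimage_linearMap (volume : Measure (Fin r → ℝ)) hLlin D
  rw [LinearMap.det_toLin', abs_inv, ← measure_preimage_add volume (-c)] at hvol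
  set T := (fun h => -c + h) ⁻¹' ((Matrix.toLin' L) ⁻¹' D) with hTdef
  set F : (Fin r → ℝ) → Fin p → ℝ := fun a => fun i => ∑ k, a k * v k i with hF
  have hFV : ∀ a, F a = Vᵀ *ᵥ a := by
    intro a; ext i
    simp only [hF, Matrix.mulVec, dotProduct, hVdef, Matrix.transpose_apply, Matrix.of_apply]
    exact Finset.sum_congr rfl fun k _ => mul_comm _ _
  set S : Set (Fin p → ℝ) := {w' | (w' - w) ⬝ᵥ G.mulVec (w' - w) ≤ δ} with hS
  have hTsub : T ⊆ F ⁻¹' S ∩ D := by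
    intro a hat
    have h1 : ∑ k, (L *ᵥ (-c + a)) k ^ 2 ≤ (1.58 * R) ^ 2 := hat
    set z := -c + a with hz
    have haz : a = c + z := by rw [hz]; abel
    have h2 : ∑ k, (L *ᵥ z) k ^ 2 =
        ((1.58 * R) ^ 2 * 16 / δ) * ∑ j, lam j * ((U * Vᵀ) *ᵥ z) j ^ 2 := by
      rw [Finset.mul_sum]
      refine Finset.sum_congr rfl fun j _ => ?_
      rw [hL, ← Matrix.mulVec_mulVec, Matrix.mulVec_diagonal, mul_pow, Real.sq_sqrt (hq0 j).le, hq]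
      ring
    rw [h2] at h1
    have h3 : ∑ j, lam j * ((U * Vᵀ) *ᵥ z) j ^ 2 ≤ κ * R ^ 2 := by
      rw [hκR]
      have hpos : 0 < (1.58 * R) ^ 2 * 16 / δ := by positivity
      rw [← le_div_iff₀' hpos] at h1
      refine h1.trans (le_of_eq ?_)
      field_simp
    obtain ⟨g1, g2⟩ := hpoint z h3
    rw [← haz] at g1 g2
    refine ⟨?_, ?_⟩
    · show (F a - w) ⬝ᵥ G.mulVec (F a - w) ≤ δ
      rw [hFV]
      linarith
    · show (∑ k, a k ^ 2) ≤ (1.58 * R) ^ 2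
      simpa [dotProduct, sq] using g1
  have hmass : ENNReal.ofReal |L.det|⁻¹ ≤ refPrior p r R v S := by
    have hFm : Measurable F := by
      rw [hF]; fun_prop
    refine le_trans ?_ (Measure.le_map_apply hFm.aemeasurable S)
    rw [Measure.smul_apply, smul_eq_mul, Measure.restrict_apply' hBm]
    calc ENNReal.ofReal |L.det|⁻¹ = (volume D)⁻¹ * volume T := by
          rw [hvol, mul_comm, mul_assoc, ENNReal.mul_inv_cancel hB0 hBt, mul_one]
      _ ≤ _ := by gcongr
  refine (aux_negLog _ _ hdetL0 hmass).trans (ENNReal.ofReal_le_ofReal ?_)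
  have h1 : |L.det| ≤ ∏ j, Real.sqrt (q j) := by
    rw [hdetL]; exact mul_le_of_le_one_right hprod.le hdetM
  refine (Real.log_le_log hdetL0 h1).trans ?_
  rw [Real.log_prod (fun j _ => (Real.sqrt_pos.mpr (hq0 j)).ne'), Finset.mul_sum]
  refine Finset.sum_le_sum fun j _ => ?_
  rw [Real.log_sqrt (hq0 j).le]
  have h2 : Real.log (q j) ≤ Real.log (40 * R ^ 2 * lam j / δ) := by
    apply Real.log_le_log (hq0 j)
    rw [hq]
    have : 0 ≤ lam j * R ^ 2 := mul_nonneg (hlam0 j).le (sq_nonneg _)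
    apply div_le_div_of_nonneg_right _ hδ0.le
    nlinarith
  linarith

end
end

section
/- Ellipsoidal Covering of the Grassmannian (Lemma). There is an absolute constant C > 0 with the following property. Let 1 ≤ r ≤ d be integers and let μ be a probability measure on the set of d×d real symmetric idempotent matrices of rank r (orthogonal projection matrices of rank r) that is invariant under conjugation P ↦ QPQᵀ by every orthogonal matrix Q ∈ O(d); this characterizes the uniform measure on the Grassmannian Gr(d,r). Then for every rank-r orthogonal projection matrix P₀, every ε > 0, and every d×d positive semidefinite Σ with eigenvalues λ_1 ≥ … ≥ λ_d (nonincreasing, with multiplicity): log( 1 / μ{ P : ‖Σ^{1/2}(P₀ − P)‖_op ≤ ε } ) ≤ ((d−r)/2)·Σ_{k=1}^{r} log( C·max{λ_k, ε²}/ε² ) + (r/2)·Σ_{k=1}^{d−r} log( C·max{λ_k, ε²}/ε² ). -/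
open MeasureTheory
open scoped ENNReal NNReal Matrix MatrixOrder

noncomputable section

instance {m n : Type*} : MeasurableSpace (Matrix m n ℝ) :=
  (inferInstance : MeasurableSpace (m → n → ℝ))

instance matBorel {m n : Type*} [Fintype m] [Fintype n] : BorelSpace (Matrix m n ℝ) :=
  inferInstanceAs (BorelSpace (m → n → ℝ))

instance matSecond {m n : Type*} [Fintype m] [Fintype n] :
    SecondCountableTopology (Matrix m n ℝ) :=
  inferInstanceAs (SecondCountableTopology (m → n → ℝ))

instance orthCompact {ι : Type*} [Fintype ι] [DecidableEq ι] :
    CompactSpace (Matrix.orthogonalGroup ι ℝ) := by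
  have hcl : IsClosed (Matrix.orthogonalGroup ι ℝ : Set (Matrix ι ι ℝ)) := isClosed_unitary
  have hK : IsCompact (Set.pi Set.univ (fun _ : ι => Set.pi Set.univ
      (fun _ : ι => Set.Icc (-1 : ℝ) 1)) : Set (Matrix ι ι ℝ)) :=
    isCompact_univ_pi (fun _ => isCompact_univ_pi (fun _ => isCompact_Icc))
  refine isCompact_iff_compactSpace.1 (hK.of_isClosed_subset hcl ?_)
  intro (Q : Matrix ι ι ℝ) hQ i _ j _
  have h1 := (Matrix.mem_orthogonalGroup_iff ι ℝ).1 hQ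
  have h2 : ∑ k, Q i k * Q i k = 1 := by
    have h : (Q * Qᵀ) i i = 1 := by rw [h1]; simp
    rw [Matrix.mul_apply] at h
    exact h
  have h3 : Q i j * Q i j ≤ 1 := by
    rw [← h2]
    exact Finset.single_le_sum (f := fun k => Q i k * Q i k)
      (fun k _ => mul_self_nonneg _) (Finset.mem_univ j)
  constructor <;> nlinarith

/-- Uniqueness of invariant measures on an orbit of the conjugation action. -/
theorem invariant_unique {ι : Type*} [Fintype ι] [DecidableEq ι]
    (E : Matrix ι ι ℝ) (μ ν : Measure (Matrix ι ι ℝ)) [IsProbabilityMeasure μ] [IsFiniteMeasure ν]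
    (hμ : ∀ Q : Matrix ι ι ℝ, Q * Qᵀ = 1 → Qᵀ * Q = 1 → Measure.map (fun P => Q * P * Qᵀ) μ = μ)
    (hν : ∀ Q : Matrix ι ι ℝ, Q * Qᵀ = 1 → Qᵀ * Q = 1 → Measure.map (fun P => Q * P * Qᵀ) ν = ν)
    (hμE : ∀ᵐ P ∂μ, ∃ Q : Matrix ι ι ℝ, Q * Qᵀ = 1 ∧ Qᵀ * Q = 1 ∧ P = Q * E * Qᵀ)
    (hνE : ∀ᵐ P ∂ν, ∃ Q : Matrix ι ι ℝ, Q * Qᵀ = 1 ∧ Qᵀ * Q = 1 ∧ P = Q * E * Qᵀ)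
    (A : Set (Matrix ι ι ℝ)) (hA : MeasurableSet A) :
    ν A = ν Set.univ * μ A := by
  let G := Matrix.orthogonalGroup ι ℝ
  let _ : MeasurableSpace G := borel G
  have : BorelSpace G := ⟨rfl⟩
  let H : Measure G := Measure.haarMeasure ⊤
  have : IsProbabilityMeasure H := ⟨by
    have := Measure.haarMeasure_self (K₀ := (⊤ : TopologicalSpace.PositiveCompacts G))
    simpa using this⟩
  let S : Set (Matrix ι ι ℝ × G) :=
    {p | (p.2 : Matrix ι ι ℝ)ᵀ * p.1 * (p.2 : Matrix ι ι ℝ) ∈ A}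
  have hS : MeasurableSet S := by
    have hc : Continuous (fun p : Matrix ι ι ℝ × G =>
        (p.2 : Matrix ι ι ℝ)ᵀ * p.1 * (p.2 : Matrix ι ι ℝ)) := by fun_prop
    exact hc.measurable hA
  set h0 := H {Q : G | (Q : Matrix ι ι ℝ)ᵀ * E * (Q : Matrix ι ι ℝ) ∈ A} with hh0
  have key : ∀ ρ : Measure (Matrix ι ι ℝ), IsFiniteMeasure ρ →
      (∀ Q : Matrix ι ι ℝ, Q * Qᵀ = 1 → Qᵀ * Q = 1 → Measure.map (fun P => Q * P * Qᵀ) ρ = ρ) →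
      (∀ᵐ P ∂ρ, ∃ Q : Matrix ι ι ℝ, Q * Qᵀ = 1 ∧ Qᵀ * Q = 1 ∧ P = Q * E * Qᵀ) →
      ρ A = h0 * ρ Set.univ := by
    intro ρ _ hinv horb
    have e1 : (ρ.prod H) S = h0 * ρ Set.univ := by
      rw [Measure.prod_apply hS, ← lintegral_const]
      apply lintegral_congr_ae
      filter_upwards [horb] with P hP
      obtain ⟨R, hR1, hR2, rfl⟩ := hP
      let R' : G := ⟨R, (Matrix.mem_orthogonalGroup_iff ι ℝ).2 hR1⟩
      have : Prod.mk (R * E * Rᵀ) ⁻¹' S =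
          (fun Q : G => R'⁻¹ * Q) ⁻¹'
            {Q : G | (Q : Matrix ι ι ℝ)ᵀ * E * (Q : Matrix ι ι ℝ) ∈ A} := by
        ext Q
        have hco : ((R'⁻¹ * Q : G) : Matrix ι ι ℝ) = Rᵀ * (Q : Matrix ι ι ℝ) := by
          rfl
        simp only [Set.mem_preimage, Set.mem_ofPred_eq, S, hco, Matrix.transpose_mul,
          Matrix.transpose_transpose, Matrix.mul_assoc]
      rw [this, measure_preimage_mul]
    have e2 : (ρ.prod H) S = ρ A := by
      rw [Measure.prod_apply_symm hS]
      have : ∀ Q : G, ρ ((fun P => (P, Q)) ⁻¹' S) = ρ A := by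
        intro Q
        have hq1 := (Matrix.mem_orthogonalGroup_iff ι ℝ).1 Q.2
        have hq2 := (Matrix.mem_orthogonalGroup_iff' ι ℝ).1 Q.2
        have := hinv (Q : Matrix ι ι ℝ)ᵀ (by simpa using hq2) (by simpa using hq1)
        conv_rhs => rw [← this]
        rw [Measure.map_apply _ hA]
        · simp only [Matrix.transpose_transpose]; rfl
        · exact Continuous.measurable (by fun_prop)
      simp [this]
    rw [← e1, e2]
  have k1 := key μ inferInstance hμ hμE
  have k2 := key ν inferInstance hν hνE
  rw [k2, k1]; simp [mul_comm]

theorem spectral_real {ι : Type*} [Fintype ι] [DecidableEq ι] {A : Matrix ι ι ℝ}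
    (hA : A.IsHermitian) : ∃ V : Matrix ι ι ℝ, V * Vᵀ = 1 ∧ Vᵀ * V = 1 ∧
      A = V * Matrix.diagonal hA.eigenvalues * Vᵀ := by
  refine ⟨hA.eigenvectorUnitary, ?_, ?_, ?_⟩
  · exact (Matrix.mem_orthogonalGroup_iff ι ℝ).1 hA.eigenvectorUnitary.2
  · exact (Matrix.mem_orthogonalGroup_iff' ι ℝ).1 hA.eigenvectorUnitary.2
  · have h := hA.spectral_theorem
    rw [Unitary.conjStarAlgAut_apply] at h
    exact h

/-- `Y` satisfies `|Y x|² ≤ c |x|²`. -/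
def Ctr {m k : Type*} [Fintype m] [Fintype k] (c : ℝ) (Y : Matrix m k ℝ) : Prop :=
  ∀ x : k → ℝ, (Y *ᵥ x) ⬝ᵥ (Y *ᵥ x) ≤ c * (x ⬝ᵥ x)

theorem dp_nonneg {m : Type*} [Fintype m] (x : m → ℝ) : 0 ≤ x ⬝ᵥ x :=
  Finset.sum_nonneg fun _ _ => mul_self_nonneg _

theorem Ctr.transpose {m k : Type*} [Fintype m] [Fintype k] {Y : Matrix m k ℝ} (h : Ctr 1 Y) :
    Ctr 1 Yᵀ := by
  intro x
  have h1 := h (Yᵀ *ᵥ x)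
  have h2 := dp_nonneg (x - Y *ᵥ (Yᵀ *ᵥ x))
  have h3 : x ⬝ᵥ (Y *ᵥ (Yᵀ *ᵥ x)) = (Yᵀ *ᵥ x) ⬝ᵥ (Yᵀ *ᵥ x) := by
    rw [Matrix.dotProduct_mulVec, ← Matrix.mulVec_transpose]
  rw [dotProduct_sub, sub_dotProduct, sub_dotProduct,
    dotProduct_comm (Y *ᵥ (Yᵀ *ᵥ x)) x, h3] at h2
  linarith

theorem Ctr.mul {m k l : Type*} [Fintype m] [Fintype k] [Fintype l] {Y : Matrix m k ℝ}
    {Z : Matrix k l ℝ} (h : Ctr 1 Y) (h' : Ctr 1 Z) : Ctr 1 (Y * Z) := by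
  intro x
  rw [← Matrix.mulVec_mulVec]
  have := h (Z *ᵥ x)
  have := h' x
  linarith

theorem orth_ctr {m k : Type*} [Fintype m] [Fintype k] [DecidableEq k] {V : Matrix m k ℝ}
    (hV : Vᵀ * V = 1) (x : k → ℝ) : (V *ᵥ x) ⬝ᵥ (V *ᵥ x) = x ⬝ᵥ x := by
  rw [Matrix.dotProduct_mulVec, ← Matrix.mulVec_transpose, Matrix.mulVec_mulVec, hV,
    Matrix.one_mulVec]

theorem exists_shrink {ι : Type*} [Fintype ι] [DecidableEq ι] {A : Matrix ι ι ℝ}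
    (hA : A.IsHermitian) (t : ℝ) (ht : 0 < t) :
    ∃ S : Matrix ι ι ℝ, Ctr 1 S ∧ (∀ x, (S *ᵥ x) ⬝ᵥ (A *ᵥ (S *ᵥ x)) ≤ t * (x ⬝ᵥ x)) ∧
      |S.det| = ∏ i, Real.sqrt (t / max (hA.eigenvalues i) t) := by
  obtain ⟨V, hV1, hV2, hAV⟩ := spectral_real hA
  set a := hA.eigenvalues with ha
  set s : ι → ℝ := fun i => Real.sqrt (t / max (a i) t) with hs
  have hpos : ∀ i, 0 < max (a i) t := fun i => lt_max_of_lt_right ht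
  have hs2 : ∀ i, s i * s i = t / max (a i) t := fun i =>
    Real.mul_self_sqrt (div_nonneg ht.le (hpos i).le)
  refine ⟨V * Matrix.diagonal s, ?_, ?_, ?_⟩
  · intro x
    rw [← Matrix.mulVec_mulVec, orth_ctr hV2, one_mul]
    apply Finset.sum_le_sum
    intro i _
    rw [Matrix.mulVec_diagonal]
    have : s i * s i ≤ 1 := by
      rw [hs2, div_le_one (hpos i)]; exact le_max_right _ _
    nlinarith [mul_self_nonneg (x i)]
  · intro x
    have e : A *ᵥ ((V * Matrix.diagonal s) *ᵥ x) =
        V *ᵥ (Matrix.diagonal a *ᵥ (Matrix.diagonal s *ᵥ x)) := by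
      rw [Matrix.mulVec_mulVec, Matrix.mulVec_mulVec, Matrix.mulVec_mulVec]
      congr 1
      rw [hAV]
      calc V * Matrix.diagonal a * Vᵀ * (V * Matrix.diagonal s)
          = V * Matrix.diagonal a * (Vᵀ * V) * Matrix.diagonal s := by
            simp only [Matrix.mul_assoc]
        _ = _ := by rw [hV2, Matrix.mul_one, Matrix.mul_assoc]
    rw [e, ← Matrix.mulVec_mulVec, Matrix.dotProduct_mulVec, ← Matrix.mulVec_transpose,
      Matrix.mulVec_mulVec, hV2, Matrix.one_mulVec]
    rw [dotProduct, dotProduct, Finset.mul_sum]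
    apply Finset.sum_le_sum
    intro i _
    simp only [Matrix.mulVec_diagonal]
    have : a i * (s i * s i) ≤ t := by
      rw [hs2, mul_div_assoc', div_le_iff₀ (hpos i), mul_comm]
      exact mul_le_mul_of_nonneg_left (le_max_left _ _) ht.le
    nlinarith [mul_self_nonneg (x i)]
  · have hdV : |V.det| = 1 := by
      have : V.det * V.det = 1 := by
        have := congrArg Matrix.det hV1
        simpa using this
      rcases mul_self_eq_one_iff.1 this with h | h <;> simp [h]
    rw [Matrix.det_mul, abs_mul, hdV, one_mul, Matrix.det_diagonal, Finset.abs_prod]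
    exact Finset.prod_congr rfl fun i _ => abs_of_nonneg (Real.sqrt_nonneg _)

theorem det_ge_one {ι : Type*} [Fintype ι] [DecidableEq ι] {X : Matrix ι ι ℝ}
    (h : ∀ x, x ⬝ᵥ x ≤ (X *ᵥ x) ⬝ᵥ (X *ᵥ x)) : 1 ≤ |X.det| := by
  have hH : (Xᵀ * X).IsHermitian := Matrix.isHermitian_conjTranspose_mul_self X
  have h1 : ∀ i, 1 ≤ hH.eigenvalues i := by
    intro i
    have e := hH.eigenvalues_eq i
    have hn : (hH.eigenvectorBasis i : ι → ℝ) ⬝ᵥ (hH.eigenvectorBasis i) = 1 := by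
      have := hH.eigenvectorBasis.orthonormal.1 i
      have h2 := EuclideanSpace.real_norm_sq_eq (hH.eigenvectorBasis i)
      rw [this] at h2
      simp only [dotProduct]
      rw [one_pow] at h2
      rw [h2]
      exact Finset.sum_congr rfl fun j _ => (sq _).symm
    have := h (hH.eigenvectorBasis i)
    rw [hn, Matrix.dotProduct_mulVec, ← Matrix.mulVec_transpose, Matrix.mulVec_mulVec] at this
    rw [e]
    simp only [star_trivial, RCLike.re_to_real]
    rw [dotProduct_comm]; exact this
  have h2 : 1 ≤ (Xᵀ * X).det := by
    rw [hH.det_eq_prod_eigenvalues]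
    simp only [RCLike.ofReal_real_eq_id, id]
    calc (1:ℝ) = ∏ i : ι, (1:ℝ) := by simp
      _ ≤ _ := Finset.prod_le_prod (fun _ _ => zero_le_one) fun i _ => h1 i
  rw [Matrix.det_mul, Matrix.det_transpose] at h2
  have := abs_mul_abs_self X.det
  nlinarith [abs_nonneg X.det]

theorem X_bounds {ι : Type*} [Fintype ι] [DecidableEq ι] {X : Matrix ι ι ℝ}
    (h : Ctr 1 (X - (2:ℝ) • 1)) : (∀ x, x ⬝ᵥ x ≤ (X *ᵥ x) ⬝ᵥ (X *ᵥ x)) ∧ Ctr 9 X := by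
  have key : ∀ x, x ⬝ᵥ x ≤ (X *ᵥ x) ⬝ᵥ (X *ᵥ x) ∧ (X *ᵥ x) ⬝ᵥ (X *ᵥ x) ≤ 9 * (x ⬝ᵥ x) := by
    intro x
    set w := (X - (2:ℝ) • 1) *ᵥ x with hw
    have e : X *ᵥ x = (2:ℝ) • x + w := by
      rw [hw, Matrix.sub_mulVec, Matrix.smul_mulVec, Matrix.one_mulVec]; abel
    have h1 : w ⬝ᵥ w ≤ 1 * (x ⬝ᵥ x) := h x
    have h2 := dp_nonneg (x + w)
    have h3 := dp_nonneg (x - w)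
    rw [e]
    simp only [dotProduct_add, add_dotProduct, dotProduct_sub, sub_dotProduct, smul_dotProduct,
      dotProduct_smul, smul_eq_mul, dotProduct_comm w x] at h2 h3 ⊢
    constructor <;> linarith
  exact ⟨fun x => (key x).1, fun x => (key x).2⟩

/-- The model projection. -/
abbrev EE (r n : ℕ) : Matrix (Fin r ⊕ Fin n) (Fin r ⊕ Fin n) ℝ := Matrix.fromBlocks 1 0 0 0

theorem EE_eq (r n : ℕ) : EE r n = Matrix.diagonal (Sum.elim (fun _ => 1) (fun _ => 0)) := by
  ext i j
  rcases i with i | i <;> rcases j with j | j <;>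
    simp [Matrix.diagonal_apply, Matrix.one_apply]

theorem proj_eig {κ : Type*} [Fintype κ] [DecidableEq κ] {P : Matrix κ κ ℝ}
    (hP : P.IsHermitian) (hPP : P * P = P) (i : κ) : hP.eigenvalues i = 0 ∨ hP.eigenvalues i = 1 := by
  obtain ⟨V, hV1, hV2, hAV⟩ := spectral_real hP
  have hD : Matrix.diagonal hP.eigenvalues = Vᵀ * P * V := by
    conv_rhs => rw [hAV]
    calc _ = (Vᵀ * V) * Matrix.diagonal hP.eigenvalues * (Vᵀ * V) := by rw [hV2]; simp
      _ = _ := by simp only [Matrix.mul_assoc]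
  have hDD : Matrix.diagonal hP.eigenvalues * Matrix.diagonal hP.eigenvalues
      = Matrix.diagonal hP.eigenvalues := by
    rw [hD]
    calc _ = Vᵀ * P * (V * Vᵀ) * P * V := by simp only [Matrix.mul_assoc]
      _ = Vᵀ * (P * P) * V := by rw [hV1]; simp only [Matrix.mul_assoc, Matrix.one_mul]
      _ = _ := by rw [hPP]
  have := congrFun (congrFun hDD i) i
  simp only [Matrix.diagonal_mul_diagonal, Matrix.diagonal_apply_eq] at this
  rcases eq_or_ne (hP.eigenvalues i) 0 with h | h
  · exact Or.inl h
  · exact Or.inr (mul_left_cancel₀ h (by rw [this, mul_one]))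

theorem proj_orbit {κ : Type*} [Fintype κ] [DecidableEq κ] {P : Matrix κ κ ℝ} {r n : ℕ}
    (hP : P.IsHermitian) (hPP : P * P = P) (hr : P.rank = r) (hc : Fintype.card κ = r + n) :
    ∃ U : Matrix κ (Fin r ⊕ Fin n) ℝ, U * Uᵀ = 1 ∧ Uᵀ * U = 1 ∧ P = U * EE r n * Uᵀ := by
  obtain ⟨V, hV1, hV2, hAV⟩ := spectral_real hP
  rw [hP.rank_eq_card_non_zero_eigs] at hr
  let p : κ → Prop := fun i => hP.eigenvalues i ≠ 0
  have hcc : Fintype.card {i // ¬ p i} = n := by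
    rw [Fintype.card_subtype_compl]; 
    have : Fintype.card {i // p i} = r := hr
    omega
  let e1 : Fin r ≃ {i // p i} := (Fintype.equivFinOfCardEq hr).symm
  let e2 : Fin n ≃ {i // ¬ p i} := (Fintype.equivFinOfCardEq hcc).symm
  let σ : Fin r ⊕ Fin n ≃ κ := (Equiv.sumCongr e1 e2).trans (Equiv.sumCompl p)
  have hE : EE r n = (Matrix.diagonal hP.eigenvalues).submatrix σ σ := by
    rw [EE_eq, Matrix.submatrix_diagonal_equiv]
    congr 1
    ext i
    rcases i with i | i
    · have : hP.eigenvalues (e1 i) ≠ 0 := (e1 i).2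
      simpa [σ] using ((proj_eig hP hPP (e1 i)).resolve_left this).symm
    · have : hP.eigenvalues (e2 i) = 0 := not_not.1 (e2 i).2
      simpa [σ] using this.symm
  refine ⟨V.submatrix id σ, ?_, ?_, ?_⟩
  · rw [Matrix.transpose_submatrix, Matrix.submatrix_mul_equiv, hV1]; simp
  · rw [Matrix.transpose_submatrix, ← Matrix.submatrix_mul _ _ _ id _ Function.bijective_id, hV2]
    simp
  · rw [hE, Matrix.transpose_submatrix, Matrix.submatrix_mul_equiv, Matrix.submatrix_mul_equiv,
      ← hAV]; simp

theorem proj_rank_of_trace {κ : Type*} [Fintype κ] [DecidableEq κ] {P : Matrix κ κ ℝ} {r : ℕ}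
    (hP : P.IsHermitian) (hPP : P * P = P) (hr : P.trace = r) : P.rank = r := by
  rw [hP.rank_eq_card_non_zero_eigs]
  rw [hP.trace_eq_sum_eigenvalues] at hr
  have : ∀ i, hP.eigenvalues i = if hP.eigenvalues i ≠ 0 then (1:ℝ) else 0 := by
    intro i
    rcases proj_eig hP hPP i with h | h <;> simp [h]
  simp only [RCLike.ofReal_real_eq_id, id] at hr
  rw [Finset.sum_congr rfl fun i _ => this i] at hr
  rw [Finset.sum_boole] at hr
  rw [Fintype.card_subtype]
  exact_mod_cast hr

/-- Orthogonal projection onto the column space of a full-rank matrix. -/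
def colproj {ι ρ : Type*} [Fintype ι] [Fintype ρ] [DecidableEq ρ] (G : Matrix ι ρ ℝ) :
    Matrix ι ι ℝ := G * (Gᵀ * G)⁻¹ * Gᵀ

section colproj
variable {ι κ ρ : Type*} [Fintype ι] [Fintype κ] [Fintype ρ] [DecidableEq ρ]

theorem colproj_symm (G : Matrix ι ρ ℝ) : (colproj G)ᵀ = colproj G := by
  unfold colproj
  rw [Matrix.transpose_mul, Matrix.transpose_mul, Matrix.transpose_nonsing_inv,
    Matrix.transpose_mul, Matrix.transpose_transpose, Matrix.mul_assoc]

theorem colproj_mul {G : Matrix ι ρ ℝ} (h : (Gᵀ * G).det ≠ 0) : colproj G * G = G := by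
  unfold colproj
  rw [Matrix.mul_assoc, Matrix.mul_assoc, Matrix.nonsing_inv_mul _ (isUnit_iff_ne_zero.2 h),
    Matrix.mul_one]

theorem colproj_idem {G : Matrix ι ρ ℝ} (h : (Gᵀ * G).det ≠ 0) :
    colproj G * colproj G = colproj G := by
  calc colproj G * colproj G = colproj G * (G * (Gᵀ * G)⁻¹ * Gᵀ) := rfl
    _ = (colproj G * G) * (Gᵀ * G)⁻¹ * Gᵀ := by simp only [Matrix.mul_assoc]
    _ = _ := by rw [colproj_mul h, colproj]

theorem colproj_trace {G : Matrix ι ρ ℝ} (h : (Gᵀ * G).det ≠ 0) :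
    (colproj G).trace = Fintype.card ρ := by
  unfold colproj
  rw [Matrix.mul_assoc, Matrix.trace_mul_comm, Matrix.mul_assoc,
    Matrix.nonsing_inv_mul _ (isUnit_iff_ne_zero.2 h), Matrix.trace_one]

theorem colproj_equiv [DecidableEq ι] {Q : Matrix κ ι ℝ} (hQ : Qᵀ * Q = 1) (G : Matrix ι ρ ℝ) :
    colproj (Q * G) = Q * colproj G * Qᵀ := by
  unfold colproj
  have : (Q * G)ᵀ * (Q * G) = Gᵀ * G := by
    rw [Matrix.transpose_mul, Matrix.mul_assoc, ← Matrix.mul_assoc Qᵀ, hQ, Matrix.one_mul]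
  rw [this, Matrix.transpose_mul]
  simp only [Matrix.mul_assoc]

theorem colproj_measurable : Measurable (colproj : Matrix ι ρ ℝ → Matrix ι ι ℝ) := by
  have : (colproj : Matrix ι ρ ℝ → Matrix ι ι ℝ) =
      fun G => ((Gᵀ * G).det)⁻¹ • (G * (Gᵀ * G).adjugate * Gᵀ) := by
    ext G
    simp [colproj, Matrix.inv_def]
  rw [this]
  have h1 : Measurable fun G : Matrix ι ρ ℝ => ((Gᵀ * G).det)⁻¹ :=
    (Continuous.measurable (by fun_prop)).inv
  have h2 : Measurable fun G : Matrix ι ρ ℝ => (G * (Gᵀ * G).adjugate * Gᵀ) := by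
    refine Continuous.measurable ?_
    exact (continuous_id.matrix_mul
      (Continuous.matrix_adjugate (by fun_prop))).matrix_mul (by fun_prop)
  exact h1.smul h2
end colproj

theorem geom {r n : ℕ} {Sig : Matrix (Fin r ⊕ Fin n) (Fin r ⊕ Fin n) ℝ} (hS : Sig.PosSemidef)
    {X : Matrix (Fin r) (Fin r) ℝ} (hX : ∀ x, x ⬝ᵥ x ≤ (X *ᵥ x) ⬝ᵥ (X *ᵥ x))
    {Z : Matrix (Fin n) (Fin r) ℝ} {t : ℝ} (ht : 0 ≤ t)
    (hA : ∀ u, (Z *ᵥ u) ⬝ᵥ (Sig.toBlocks₂₂ *ᵥ (Z *ᵥ u)) ≤ t * (u ⬝ᵥ u))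
    (hB : ∀ w, (Zᵀ *ᵥ w) ⬝ᵥ (Sig.toBlocks₁₁ *ᵥ (Zᵀ *ᵥ w)) ≤ t * (w ⬝ᵥ w)) :
    ((Matrix.fromRows X (Z * X))ᵀ * Matrix.fromRows X (Z * X)).det ≠ 0 ∧
    ∀ x, ((EE r n - colproj (Matrix.fromRows X (Z * X))) *ᵥ x) ⬝ᵥ
      (Sig *ᵥ ((EE r n - colproj (Matrix.fromRows X (Z * X))) *ᵥ x)) ≤ 2 * t * (x ⬝ᵥ x) := by
  set G := Matrix.fromRows X (Z * X) with hG
  have hGv : ∀ v, G *ᵥ v = Sum.elim (X *ᵥ v) (Z *ᵥ (X *ᵥ v)) := by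
    intro v; rw [hG, Matrix.fromRows_mulVec, Matrix.mulVec_mulVec]
  have hdet : (Gᵀ * G).det ≠ 0 := by
    intro h0
    obtain ⟨v, hv, hv0⟩ := Matrix.exists_mulVec_eq_zero_iff.2 h0
    apply hv
    have h1 : (G *ᵥ v) ⬝ᵥ (G *ᵥ v) = 0 := by
      rw [Matrix.dotProduct_mulVec, ← Matrix.mulVec_transpose, Matrix.mulVec_mulVec, hv0,
        zero_dotProduct]
    rw [hGv, sumElim_dotProduct_sumElim] at h1
    have h2 := hX v
    have h3 := dp_nonneg (Z *ᵥ (X *ᵥ v))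
    have h4 := dp_nonneg v
    exact dotProduct_self_eq_zero.1 (le_antisymm (by linarith) h4)
  refine ⟨hdet, ?_⟩
  have hXdet : X.det ≠ 0 := by
    have := det_ge_one hX
    intro h; rw [h] at this; simp at this; linarith
  intro x
  set P := colproj G with hP
  set c := ((Gᵀ * G)⁻¹ * Gᵀ) *ᵥ x with hc
  have hPx : P *ᵥ x = G *ᵥ c := by
    rw [hc, Matrix.mulVec_mulVec, hP, colproj, Matrix.mul_assoc]
  set u := X *ᵥ c with hu
  obtain ⟨x1, x2, rfl⟩ : ∃ (x1 : Fin r → ℝ) (x2 : Fin n → ℝ), x = Sum.elim x1 x2 :=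
    ⟨x ∘ Sum.inl, x ∘ Sum.inr, (Sum.elim_comp_inl_inr x).symm⟩
  set x := Sum.elim x1 x2 with hx
  set w := x2 - Z *ᵥ u with hw
  have hPx' : P *ᵥ x = Sum.elim u (Z *ᵥ u) := by rw [hPx, hGv]
  have hPT : Pᵀ = P := colproj_symm G
  have hfix : ∀ v, P *ᵥ (Sum.elim v (Z *ᵥ v)) = Sum.elim v (Z *ᵥ v) := by
    intro v
    have : Sum.elim v (Z *ᵥ v) = G *ᵥ (X⁻¹ *ᵥ v) := by
      rw [hGv, Matrix.mulVec_mulVec _ X, Matrix.mul_nonsing_inv _ (isUnit_iff_ne_zero.2 hXdet),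
        Matrix.one_mulVec]
    rw [this, Matrix.mulVec_mulVec, hP, colproj_mul hdet]
  have horth : ∀ v, (Sum.elim v (Z *ᵥ v)) ⬝ᵥ (P *ᵥ x) = (Sum.elim v (Z *ᵥ v)) ⬝ᵥ x := by
    intro v
    rw [Matrix.dotProduct_mulVec, ← Matrix.mulVec_transpose, hPT, hfix]
  have horth' : ∀ v, v ⬝ᵥ (x1 - u + Zᵀ *ᵥ w) = 0 := by
    intro v
    have := horth v
    rw [hPx', hx, sumElim_dotProduct_sumElim, sumElim_dotProduct_sumElim] at this
    have h2 : v ⬝ᵥ (Zᵀ *ᵥ w) = (Z *ᵥ v) ⬝ᵥ w := by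
      rw [Matrix.dotProduct_mulVec, ← Matrix.mulVec_transpose, Matrix.transpose_transpose]
    rw [dotProduct_add, h2, hw, dotProduct_sub, dotProduct_sub]
    linarith
  have hu1 : Zᵀ *ᵥ w = u - x1 := by
    have h0 := dotProduct_self_eq_zero.1 (horth' (x1 - u + Zᵀ *ᵥ w))
    have : Zᵀ *ᵥ w - (u - x1) = 0 := by rw [← h0]; abel
    exact sub_eq_zero.1 this
  have hnorm : u ⬝ᵥ u + w ⬝ᵥ w ≤ x ⬝ᵥ x := by
    have h1 := horth u
    rw [hPx', hx, sumElim_dotProduct_sumElim, sumElim_dotProduct_sumElim] at h1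
    have h2 := dp_nonneg (x1 - u)
    have h3 := dp_nonneg (Z *ᵥ u)
    rw [hx, sumElim_dotProduct_sumElim, hw]
    simp only [dotProduct_sub, sub_dotProduct, dotProduct_comm x1 u,
      dotProduct_comm x2 (Z *ᵥ u)] at h1 h2 h3 ⊢
    linarith
  have hdiff : (EE r n - P) *ᵥ x = -(Sum.elim (Zᵀ *ᵥ w) (0 : Fin n → ℝ) +
      Sum.elim (0 : Fin r → ℝ) (Z *ᵥ u)) := by
    rw [Matrix.sub_mulVec, hPx', hx, Matrix.fromBlocks_mulVec, hu1]
    ext i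
    rcases i with i | i <;> simp
  have hT : Sigᵀ = Sig := hS.1
  set p : Fin r ⊕ Fin n → ℝ := Sum.elim (Zᵀ *ᵥ w) 0 with hp
  set q : Fin r ⊕ Fin n → ℝ := Sum.elim 0 (Z *ᵥ u) with hq
  have hpp : p ⬝ᵥ (Sig *ᵥ p) ≤ t * (w ⬝ᵥ w) := by
    refine le_trans (le_of_eq ?_) (hB w)
    conv_lhs => rw [hp, ← Matrix.fromBlocks_toBlocks Sig, Matrix.fromBlocks_mulVec]
    simp
  have hqq : q ⬝ᵥ (Sig *ᵥ q) ≤ t * (u ⬝ᵥ u) := by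
    refine le_trans (le_of_eq ?_) (hA u)
    conv_lhs => rw [hq, ← Matrix.fromBlocks_toBlocks Sig, Matrix.fromBlocks_mulVec]
    simp
  have hpq : p ⬝ᵥ (Sig *ᵥ q) = q ⬝ᵥ (Sig *ᵥ p) := by
    rw [Matrix.dotProduct_mulVec, ← Matrix.mulVec_transpose, hT, dotProduct_comm]
  have hm := hS.dotProduct_mulVec_nonneg (p - q)
  simp only [star_trivial] at hm
  rw [hdiff]
  simp only [Matrix.mulVec_sub, Matrix.mulVec_add, Matrix.mulVec_neg, dotProduct_add,
    add_dotProduct, dotProduct_sub, sub_dotProduct, neg_dotProduct, dotProduct_neg]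
    at hm ⊢
  have := mul_le_mul_of_nonneg_left hnorm ht
  linarith

/-- `Y ↦ S Y M`. -/
def LM {β α : Type*} [Fintype β] [Fintype α] (S : Matrix β β ℝ) (M : Matrix α α ℝ) :
    (β → α → ℝ) →ₗ[ℝ] (β → α → ℝ) where
  toFun Y := Matrix.of.symm (S * Matrix.of Y * M)
  map_add' Y Y' := by
    show S * (Matrix.of Y + Matrix.of Y') * M = S * Matrix.of Y * M + S * Matrix.of Y' * M
    rw [Matrix.mul_add, Matrix.add_mul]
  map_smul' c Y := by
    show S * (c • Matrix.of Y) * M = c • (S * Matrix.of Y * M)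
    rw [Matrix.mul_smul, Matrix.smul_mul]

theorem LM_det {β α : Type*} [Fintype β] [Fintype α] [DecidableEq β] [DecidableEq α]
    (S : Matrix β β ℝ) (M : Matrix α α ℝ) :
    LinearMap.det (LM S M) = S.det ^ Fintype.card α * M.det ^ Fintype.card β := by
  let e : (β → α → ℝ) ≃ₗ[ℝ] (α × β → ℝ) :=
    { toFun := fun Y => Matrix.vec (Matrix.of Y)
      map_add' := fun _ _ => rfl
      map_smul' := fun _ _ => rfl
      invFun := fun y i j => y (j, i)
      left_inv := fun _ => rfl
      right_inv := fun _ => rfl }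
  have h : (e : (β → α → ℝ) →ₗ[ℝ] (α × β → ℝ)) ∘ₗ LM S M ∘ₗ
      (e.symm : (α × β → ℝ) →ₗ[ℝ] (β → α → ℝ)) =
      Matrix.toLin' (Matrix.kronecker Mᵀ S) := by
    apply LinearMap.ext
    intro y
    obtain ⟨Y, rfl⟩ := e.surjective y
    simp only [LinearMap.comp_apply, LinearEquiv.coe_coe, LinearEquiv.symm_apply_apply,
      Matrix.toLin'_apply]
    have := Matrix.kronecker_mulVec_vec S (Matrix.of Y) Mᵀ
    rw [Matrix.transpose_transpose] at this
    exact this.symm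
  rw [← LinearMap.det_conj (LM S M) e, h, LinearMap.det_toLin', Matrix.kronecker, Matrix.det_kronecker,
    Matrix.det_transpose, mul_comm]

/-- The operator-norm ball of radius `√c`. -/
def Bc (m k : Type*) [Fintype m] [Fintype k] (c : ℝ) : Set (m → k → ℝ) :=
  {Y | Ctr c (Matrix.of Y)}

section Bc
variable {m k : Type*} [Fintype m] [Fintype k]

theorem Ctr_isClosed (c : ℝ) : IsClosed {Y : Matrix m k ℝ | Ctr c Y} := by
  have : {Y : Matrix m k ℝ | Ctr c Y} =
      ⋂ x : k → ℝ, {Y : Matrix m k ℝ | (Y *ᵥ x) ⬝ᵥ (Y *ᵥ x) ≤ c * (x ⬝ᵥ x)} := by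
    ext Y; simp [Ctr]
  rw [this]
  refine isClosed_iInter fun x => isClosed_le ?_ continuous_const
  fun_prop

theorem Bc_isClosed (c : ℝ) : IsClosed (Bc m k c) := Ctr_isClosed c

theorem Bc_finite [DecidableEq k] : volume (Bc m k 1) ≠ ⊤ := by
  have hK : IsCompact (Set.pi Set.univ (fun _ : m => Set.pi Set.univ
      (fun _ : k => Set.Icc (-1 : ℝ) 1)) : Set (m → k → ℝ)) :=
    isCompact_univ_pi (fun _ => isCompact_univ_pi (fun _ => isCompact_Icc))
  refine (lt_of_le_of_lt (measure_mono ?_) hK.measure_lt_top).ne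
  intro Y hY i _ j _
  have h := hY (Pi.single j 1)
  rw [Matrix.mulVec_single_one] at h
  simp only [dotProduct_single, Pi.single_eq_same, mul_one] at h
  have h3 : Y i j * Y i j ≤ 1 := by
    refine le_trans ?_ h
    exact Finset.single_le_sum (f := fun i => Y i j * Y i j)
      (fun k _ => mul_self_nonneg _) (Finset.mem_univ i)
  constructor <;> nlinarith

theorem Bc_pos : volume (Bc m k 1) ≠ 0 := by
  let U : Set (m → k → ℝ) := {Y | ∑ i, ∑ j, Y i j ^ 2 < 1}
  have hU : IsOpen U := isOpen_lt (by fun_prop) continuous_const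
  have hne : U.Nonempty := ⟨0, by simp [U]⟩
  have hpos := hU.measure_pos volume hne
  refine (lt_of_lt_of_le hpos (measure_mono ?_)).ne'
  intro Y hY x
  have h1 : ∀ i, (Matrix.of Y *ᵥ x) i * (Matrix.of Y *ᵥ x) i ≤ (∑ j, Y i j ^ 2) * (x ⬝ᵥ x) := by
    intro i
    have := Finset.sum_mul_sq_le_sq_mul_sq Finset.univ (Y i) x
    simp only [Matrix.mulVec, dotProduct, Matrix.of_apply]
    rw [← sq]
    simpa [sq] using this
  calc _ ≤ ∑ i, (∑ j, Y i j ^ 2) * (x ⬝ᵥ x) := Finset.sum_le_sum fun i _ => h1 i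
    _ = (∑ i, ∑ j, Y i j ^ 2) * (x ⬝ᵥ x) := by rw [Finset.sum_mul]
    _ ≤ 1 * (x ⬝ᵥ x) := mul_le_mul_of_nonneg_right (le_of_lt hY) (dp_nonneg x)

open scoped Pointwise in
theorem Bc_25 : volume (Bc m k 25) ≤
    ENNReal.ofReal (5 ^ (Fintype.card m * Fintype.card k)) * volume (Bc m k 1) := by
  have : Bc m k 25 ⊆ (5:ℝ) • Bc m k 1 := by
    intro Y hY
    refine ⟨(5:ℝ)⁻¹ • Y, ?_, by simp⟩
    intro x
    have h := hY x
    have e : Matrix.of ((5:ℝ)⁻¹ • Y) *ᵥ x = (5:ℝ)⁻¹ • (Matrix.of Y *ᵥ x) :=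
      Matrix.smul_mulVec (5:ℝ)⁻¹ (Matrix.of Y) x
    rw [e, smul_dotProduct, dotProduct_smul, smul_eq_mul, smul_eq_mul]
    linarith
  refine le_trans (measure_mono this) ?_
  rw [Measure.addHaar_smul]
  have : Module.finrank ℝ (m → k → ℝ) = Fintype.card m * Fintype.card k := by
    rw [Module.finrank_pi_fintype]; simp
  rw [this, abs_of_pos (by positivity)]
end Bc

/-- Domain of matrices. -/
def DD (r n : ℕ) : Set (Fin r ⊕ Fin n → Fin r → ℝ) :=
  {G | Ctr 25 (Matrix.of G) ∧ ((Matrix.of G)ᵀ * Matrix.of G).det ≠ 0}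

theorem of_continuous {m k : Type*} :
    Continuous (Matrix.of : (m → k → ℝ) → Matrix m k ℝ) := continuous_id

theorem DD_meas (r n : ℕ) : MeasurableSet (DD r n) := by
  apply MeasurableSet.inter
  · exact (Bc_isClosed 25).measurableSet
  · have hc : Continuous fun G : Fin r ⊕ Fin n → Fin r → ℝ =>
        ((Matrix.of G)ᵀ * Matrix.of G).det := by
      have := @of_continuous (Fin r ⊕ Fin n) (Fin r)
      fun_prop
    exact (isOpen_ne_fun hc continuous_const).measurableSet

theorem sum_vol {r n : ℕ} {s : Set (Fin r ⊕ Fin n → Fin r → ℝ)} (hs : MeasurableSet s) :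
    volume s = (volume.prod volume) {p : (Fin r → Fin r → ℝ) × (Fin n → Fin r → ℝ) |
      Sum.elim p.1 p.2 ∈ s} := by
  have := volume_measurePreserving_sumPiEquivProdPi_symm
    (fun _ : Fin r ⊕ Fin n => Fin r → ℝ)
  rw [← this.measure_preimage hs.nullMeasurableSet]
  rw [← Measure.volume_eq_prod]
  congr 1

theorem elim_of {r n k : ℕ} (X : Fin r → Fin k → ℝ) (Y : Fin n → Fin k → ℝ) :
    Matrix.of (Sum.elim X Y) = Matrix.fromRows (Matrix.of X) (Matrix.of Y) := by
  ext i j; rcases i with i | i <;> rfl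

theorem DD_vol (r n : ℕ) : volume (DD r n) ≤
    ENNReal.ofReal (5 ^ (r * (r + n))) *
      (volume (Bc (Fin r) (Fin r) 1) * volume (Bc (Fin n) (Fin r) 1)) := by
  rw [sum_vol (DD_meas r n)]
  calc _ ≤ (volume.prod volume) (Bc (Fin r) (Fin r) 25 ×ˢ Bc (Fin n) (Fin r) 25) := by
        apply measure_mono
        rintro ⟨X, Y⟩ ⟨h, _⟩
        have key : ∀ x, (Matrix.of X *ᵥ x) ⬝ᵥ (Matrix.of X *ᵥ x) +
            (Matrix.of Y *ᵥ x) ⬝ᵥ (Matrix.of Y *ᵥ x) ≤ 25 * (x ⬝ᵥ x) := by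
          intro x
          have := h x
          rwa [elim_of, Matrix.fromRows_mulVec, sumElim_dotProduct_sumElim] at this
        constructor
        · intro x
          have h1 := key x
          have h2 := dp_nonneg (Matrix.of Y *ᵥ x)
          show (Matrix.of X *ᵥ x) ⬝ᵥ (Matrix.of X *ᵥ x) ≤ _
          linarith
        · intro x
          have h1 := key x
          have h2 := dp_nonneg (Matrix.of X *ᵥ x)
          show (Matrix.of Y *ᵥ x) ⬝ᵥ (Matrix.of Y *ᵥ x) ≤ _
          linarith
    _ = volume (Bc (Fin r) (Fin r) 25) * volume (Bc (Fin n) (Fin r) 25) :=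
        Measure.prod_prod _ _
    _ ≤ (ENNReal.ofReal (5 ^ (r * r)) * volume (Bc (Fin r) (Fin r) 1)) *
        (ENNReal.ofReal (5 ^ (n * r)) * volume (Bc (Fin n) (Fin r) 1)) := by
        have h1 := @Bc_25 (Fin r) (Fin r) _ _
        have h2 := @Bc_25 (Fin n) (Fin r) _ _
        simp only [Fintype.card_fin] at h1 h2
        exact mul_le_mul' h1 h2
    _ = _ := by
        have : (5:ℝ) ^ (r * (r + n)) = 5 ^ (r * r) * 5 ^ (n * r) := by
          rw [← pow_add]; congr 1; ring
        rw [this, ENNReal.ofReal_mul (by positivity)]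
        ring

theorem good_vol {r n : ℕ} {Sig : Matrix (Fin r ⊕ Fin n) (Fin r ⊕ Fin n) ℝ} (hS : Sig.PosSemidef)
    {S : Matrix (Fin n) (Fin n) ℝ} {T : Matrix (Fin r) (Fin r) ℝ} {t : ℝ} (ht : 0 ≤ t)
    (hS1 : Ctr 1 S) (hT1 : Ctr 1 T)
    (hSA : ∀ x, (S *ᵥ x) ⬝ᵥ (Sig.toBlocks₂₂ *ᵥ (S *ᵥ x)) ≤ t * (x ⬝ᵥ x))
    (hTB : ∀ x, (T *ᵥ x) ⬝ᵥ (Sig.toBlocks₁₁ *ᵥ (T *ᵥ x)) ≤ t * (x ⬝ᵥ x))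
    (gs : Set (Fin r ⊕ Fin n → Fin r → ℝ)) (hgs : MeasurableSet gs)
    (hgs' : ∀ G, G ∈ DD r n → (∀ x, ((EE r n - colproj (Matrix.of G)) *ᵥ x) ⬝ᵥ
      (Sig *ᵥ ((EE r n - colproj (Matrix.of G)) *ᵥ x)) ≤ 2 * t * (x ⬝ᵥ x)) → G ∈ gs) :
    ENNReal.ofReal (|S.det| ^ r * |T.det| ^ n) *
      (volume (Bc (Fin r) (Fin r) 1) * volume (Bc (Fin n) (Fin r) 1)) ≤ volume gs := by
  rw [sum_vol hgs]
  have hm : MeasurableSet {p : (Fin r → Fin r → ℝ) × (Fin n → Fin r → ℝ) |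
      Sum.elim p.1 p.2 ∈ gs} := by
    have hc : Continuous fun p : (Fin r → Fin r → ℝ) × (Fin n → Fin r → ℝ) =>
        (Sum.elim p.1 p.2 : Fin r ⊕ Fin n → Fin r → ℝ) := by
      refine continuous_pi fun i => ?_
      rcases i with i | i
      · exact (continuous_apply i).comp continuous_fst
      · exact (continuous_apply i).comp continuous_snd
    exact hc.measurable hgs
  rw [Measure.prod_apply hm]
  let c0 : Fin r → Fin r → ℝ := Matrix.of.symm ((2:ℝ) • (1 : Matrix (Fin r) (Fin r) ℝ))
  let K : Set (Fin r → Fin r → ℝ) := (fun X => X + -c0) ⁻¹' Bc (Fin r) (Fin r) 1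
  have hK : volume K = volume (Bc (Fin r) (Fin r) 1) := measure_preimage_add_right _ _ _
  have hKm : MeasurableSet K :=
    ((Bc_isClosed 1).preimage (continuous_id.add continuous_const)).measurableSet
  have hslice : ∀ X ∈ K, ENNReal.ofReal (|S.det| ^ r * |T.det| ^ n) *
      volume (Bc (Fin n) (Fin r) 1) ≤
      volume (Prod.mk X ⁻¹' {p : (Fin r → Fin r → ℝ) × (Fin n → Fin r → ℝ) |
      Sum.elim p.1 p.2 ∈ gs}) := by
    intro X hX
    have hX' : Ctr 1 (Matrix.of X - (2:ℝ) • 1) := by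
      have h : Ctr 1 (Matrix.of (X + -c0)) := hX
      have e : Matrix.of (X + -c0) = Matrix.of X - (2:ℝ) • 1 := by
        rw [sub_eq_add_neg]; rfl
      rwa [e] at h
    obtain ⟨hX1, hX9⟩ := X_bounds hX'
    have hdX := det_ge_one hX1
    calc _ ≤ volume (LM S (Tᵀ * Matrix.of X) '' Bc (Fin n) (Fin r) 1) := by
          rw [Measure.addHaar_image_linearMap, LM_det]
          apply mul_le_mul_left
          apply ENNReal.ofReal_le_ofReal
          simp only [Fintype.card_fin]
          rw [abs_mul, abs_pow, abs_pow]
          apply mul_le_mul_of_nonneg_left _ (by positivity)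
          apply pow_le_pow_left₀ (abs_nonneg _)
          rw [Matrix.det_mul, Matrix.det_transpose, abs_mul]
          exact le_mul_of_one_le_right (abs_nonneg _) hdX
      _ ≤ _ := by
          apply measure_mono
          rintro _ ⟨W, hW, rfl⟩
          have hW' : Ctr 1 (Matrix.of W) := hW
          set Z := S * Matrix.of W * Tᵀ with hZ
          have hZ1 : Ctr 1 Z := (hS1.mul hW').mul hT1.transpose
          have hG : Matrix.of (Sum.elim X (LM S (Tᵀ * Matrix.of X) W)) =
              Matrix.fromRows (Matrix.of X) (Z * Matrix.of X) := by
            rw [elim_of]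
            congr 1
            show S * Matrix.of W * (Tᵀ * Matrix.of X) = Z * Matrix.of X
            rw [hZ]; simp only [Matrix.mul_assoc]
          obtain ⟨g1, g2⟩ := geom (Z := Z) hS hX1 ht (by
              intro u
              have e : Z *ᵥ u = S *ᵥ ((Matrix.of W * Tᵀ) *ᵥ u) := by
                rw [hZ, Matrix.mulVec_mulVec, Matrix.mul_assoc]
              rw [e]
              refine (hSA _).trans (mul_le_mul_of_nonneg_left ?_ ht)
              have := (hW'.mul hT1.transpose) u
              linarith) (by
              intro w
              have e : Zᵀ *ᵥ w = T *ᵥ (((Matrix.of W)ᵀ * Sᵀ) *ᵥ w) := by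
                rw [hZ, Matrix.mulVec_mulVec]
                simp only [Matrix.transpose_mul, Matrix.transpose_transpose]
              rw [e]
              refine (hTB _).trans (mul_le_mul_of_nonneg_left ?_ ht)
              have := (hW'.transpose.mul hS1.transpose) w
              linarith)
          refine hgs' _ ⟨?_, ?_⟩ ?_
          · rw [hG]
            intro x
            rw [Matrix.fromRows_mulVec, sumElim_dotProduct_sumElim, ← Matrix.mulVec_mulVec]
            have h1 := hX9 x
            have h2 := hZ1 (Matrix.of X *ᵥ x)
            have h3 := dp_nonneg x
            linarith
          · rw [hG]; exact g1
          · rw [hG]; exact g2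
  calc _ = ∫⁻ _ in K, ENNReal.ofReal (|S.det| ^ r * |T.det| ^ n) *
        volume (Bc (Fin n) (Fin r) 1) := by
        rw [setLIntegral_const, hK]; ring
    _ ≤ ∫⁻ X in K, volume (Prod.mk X ⁻¹' {p : (Fin r → Fin r → ℝ) × (Fin n → Fin r → ℝ) |
      Sum.elim p.1 p.2 ∈ gs}) := setLIntegral_mono' hKm hslice
    _ ≤ _ := setLIntegral_le_lintegral _ _

theorem mul_preserving {r n : ℕ} {Q : Matrix (Fin r ⊕ Fin n) (Fin r ⊕ Fin n) ℝ}
    (hQ : Q * Qᵀ = 1) :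
    MeasurePreserving (fun G : Fin r ⊕ Fin n → Fin r → ℝ => Matrix.of.symm (Q * Matrix.of G))
      volume volume := by
  have hd : |Q.det| = 1 := by
    have : Q.det * Q.det = 1 := by
      have := congrArg Matrix.det hQ
      simpa using this
    rcases mul_self_eq_one_iff.1 this with h | h <;> simp [h]
  have e : (fun G : Fin r ⊕ Fin n → Fin r → ℝ => Matrix.of.symm (Q * Matrix.of G)) =
      LM Q (1 : Matrix (Fin r) (Fin r) ℝ) := by
    funext G
    show Q * Matrix.of G = Q * Matrix.of G * (1 : Matrix (Fin r) (Fin r) ℝ)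
    rw [Matrix.mul_one]
  have hdet : |LinearMap.det (LM Q (1 : Matrix (Fin r) (Fin r) ℝ))| = 1 := by
    rw [LM_det, Matrix.det_one, one_pow, mul_one, abs_pow, hd, one_pow]
  rw [e]
  refine ⟨(LinearMap.continuous_of_finiteDimensional _).measurable, ?_⟩
  rw [Measure.map_linearMap_addHaar_eq_smul_addHaar]
  · rw [abs_inv, hdet]; simp
  · intro h; rw [h] at hdet; simp at hdet

theorem main_measure {κ : Type*} [Fintype κ] [DecidableEq κ] {r n : ℕ}
    (hcard : Fintype.card κ = r + n)
    {U : Matrix κ (Fin r ⊕ Fin n) ℝ} (hU1 : U * Uᵀ = 1) (hU2 : Uᵀ * U = 1)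
    {P₀ : Matrix κ κ ℝ} (hP₀ : P₀ = U * EE r n * Uᵀ)
    (μ : Measure (Matrix κ κ ℝ)) [IsProbabilityMeasure μ]
    (hμ : ∀ Q : Matrix κ κ ℝ, Q * Qᵀ = 1 → Qᵀ * Q = 1 → Measure.map (fun P => Q * P * Qᵀ) μ = μ)
    (hμE : ∀ᵐ P ∂μ, ∃ Q : Matrix κ κ ℝ, Q * Qᵀ = 1 ∧ Qᵀ * Q = 1 ∧ P = Q * P₀ * Qᵀ)
    {Sig : Matrix κ κ ℝ} (hSig : Sig.PosSemidef)
    {S : Matrix (Fin n) (Fin n) ℝ} {T : Matrix (Fin r) (Fin r) ℝ} {t : ℝ} (ht : 0 ≤ t)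
    (hS1 : Ctr 1 S) (hT1 : Ctr 1 T)
    (hSA : ∀ x, (S *ᵥ x) ⬝ᵥ ((Uᵀ * Sig * U).toBlocks₂₂ *ᵥ (S *ᵥ x)) ≤ t * (x ⬝ᵥ x))
    (hTB : ∀ x, (T *ᵥ x) ⬝ᵥ ((Uᵀ * Sig * U).toBlocks₁₁ *ᵥ (T *ᵥ x)) ≤ t * (x ⬝ᵥ x)) :
    ENNReal.ofReal (|S.det| ^ r * |T.det| ^ n) ≤
      ENNReal.ofReal (5 ^ (r * (r + n))) *
        μ {P | ∀ x, ((P₀ - P) *ᵥ x) ⬝ᵥ (Sig *ᵥ ((P₀ - P) *ᵥ x)) ≤ 2 * t * (x ⬝ᵥ x)} := by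
  set A : Set (Matrix κ κ ℝ) :=
    {P | ∀ x, ((P₀ - P) *ᵥ x) ⬝ᵥ (Sig *ᵥ ((P₀ - P) *ᵥ x)) ≤ 2 * t * (x ⬝ᵥ x)} with hAdef
  have hA : MeasurableSet A := by
    have : A = ⋂ x : κ → ℝ, {P : Matrix κ κ ℝ |
        ((P₀ - P) *ᵥ x) ⬝ᵥ (Sig *ᵥ ((P₀ - P) *ᵥ x)) ≤ 2 * t * (x ⬝ᵥ x)} := by
      ext P; simp [A]
    rw [this]
    refine IsClosed.measurableSet (isClosed_iInter fun x => isClosed_le ?_ continuous_const)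
    fun_prop
  set b := volume (Bc (Fin r) (Fin r) 1) * volume (Bc (Fin n) (Fin r) 1) with hb
  have hb0 : b ≠ 0 := mul_ne_zero Bc_pos Bc_pos
  have hbt : b ≠ ⊤ := ENNReal.mul_ne_top Bc_finite Bc_finite
  have hDfin : volume (DD r n) ≠ ⊤ :=
    ne_top_of_le_ne_top (ENNReal.mul_ne_top ENNReal.ofReal_ne_top hbt) (DD_vol r n)
  let m : Measure (Fin r ⊕ Fin n → Fin r → ℝ) := volume.restrict (DD r n)
  have hmfin : IsFiniteMeasure m := ⟨by simpa [m] using hDfin.lt_top⟩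
  let f : (Fin r ⊕ Fin n → Fin r → ℝ) → Matrix κ κ ℝ := fun G => U * colproj (Matrix.of G) * Uᵀ
  have hf : Measurable f := by
    have hc : Continuous fun P : Matrix (Fin r ⊕ Fin n) (Fin r ⊕ Fin n) ℝ => U * P * Uᵀ := by
      fun_prop
    exact hc.measurable.comp (colproj_measurable.comp of_continuous.measurable)
  let ν : Measure (Matrix κ κ ℝ) := m.map f
  have hνfin : IsFiniteMeasure ν := inferInstanceAs (IsFiniteMeasure (m.map f))
  have hνinv : ∀ Q : Matrix κ κ ℝ, Q * Qᵀ = 1 → Qᵀ * Q = 1 →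
      Measure.map (fun P => Q * P * Qᵀ) ν = ν := by
    intro Q hQ1 hQ2
    set Q' := Uᵀ * Q * U with hQ'
    have hQ'1 : Q' * Q'ᵀ = 1 := by
      calc Q' * Q'ᵀ = Uᵀ * Q * (U * Uᵀ) * Qᵀ * U := by
            simp only [hQ', Matrix.transpose_mul, Matrix.transpose_transpose, Matrix.mul_assoc]
        _ = Uᵀ * (Q * Qᵀ) * U := by rw [hU1]; simp only [Matrix.mul_assoc, Matrix.one_mul]
        _ = 1 := by rw [hQ1, Matrix.mul_one, hU2]
    have hQ'2 : Q'ᵀ * Q' = 1 := by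
      calc Q'ᵀ * Q' = Uᵀ * Qᵀ * (U * Uᵀ) * Q * U := by
            simp only [hQ', Matrix.transpose_mul, Matrix.transpose_transpose, Matrix.mul_assoc]
        _ = Uᵀ * (Qᵀ * Q) * U := by rw [hU1]; simp only [Matrix.mul_assoc, Matrix.one_mul]
        _ = 1 := by rw [hQ2, Matrix.mul_one, hU2]
    let g : (Fin r ⊕ Fin n → Fin r → ℝ) → (Fin r ⊕ Fin n → Fin r → ℝ) :=
      fun G => Matrix.of.symm (Q' * Matrix.of G)
    have hg : MeasurePreserving g volume volume := mul_preserving hQ'1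
    have hgD : g ⁻¹' (DD r n) = DD r n := by
      ext G
      have e1 : (Q' * Matrix.of G)ᵀ * (Q' * Matrix.of G) = (Matrix.of G)ᵀ * Matrix.of G := by
        rw [Matrix.transpose_mul, Matrix.mul_assoc, ← Matrix.mul_assoc Q'ᵀ, hQ'2, Matrix.one_mul]
      have e2 : Ctr 25 (Q' * Matrix.of G) ↔ Ctr 25 (Matrix.of G) := by
        unfold Ctr
        simp only [← Matrix.mulVec_mulVec, orth_ctr hQ'2]
      show Ctr 25 (Q' * Matrix.of G) ∧ ((Q' * Matrix.of G)ᵀ * (Q' * Matrix.of G)).det ≠ 0 ↔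
        Ctr 25 (Matrix.of G) ∧ ((Matrix.of G)ᵀ * Matrix.of G).det ≠ 0
      rw [e1, e2]
    have hgm : MeasurePreserving g m m := by
      have := hg.restrict_preimage (DD_meas r n)
      rwa [hgD] at this
    have hcomp : (fun P => Q * P * Qᵀ) ∘ f = f ∘ g := by
      funext G
      show Q * (U * colproj (Matrix.of G) * Uᵀ) * Qᵀ = U * colproj (Q' * Matrix.of G) * Uᵀ
      rw [colproj_equiv hQ'2, hQ']
      simp only [Matrix.transpose_mul, Matrix.transpose_transpose]
      calc _ = 1 * Q * U * colproj (Matrix.of G) * Uᵀ * Qᵀ * 1 := by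
            simp only [Matrix.mul_assoc, Matrix.one_mul, Matrix.mul_one]
        _ = _ := by rw [← hU1]; simp only [Matrix.mul_assoc]
    have hconj : Measurable fun P : Matrix κ κ ℝ => Q * P * Qᵀ :=
      Continuous.measurable (by fun_prop)
    show Measure.map _ (m.map f) = m.map f
    rw [Measure.map_map hconj hf, hcomp, ← Measure.map_map hf hgm.measurable, hgm.map_eq]
  have hνE : ∀ᵐ P ∂ν, ∃ Q : Matrix κ κ ℝ, Q * Qᵀ = 1 ∧ Qᵀ * Q = 1 ∧ P = Q * P₀ * Qᵀ := by
    have hcl : MeasurableSet {P : Matrix κ κ ℝ | Pᵀ = P ∧ P * P = P ∧ P.trace = (r : ℝ)} := by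
      refine IsClosed.measurableSet (IsClosed.inter ?_ (IsClosed.inter ?_ ?_))
      · exact isClosed_eq (by fun_prop) (by fun_prop)
      · exact isClosed_eq (by fun_prop) (by fun_prop)
      · exact isClosed_eq (by fun_prop) (by fun_prop)
    have h1 : ∀ᵐ (P : Matrix κ κ ℝ) ∂ν, Pᵀ = P ∧ P * P = P ∧ P.trace = (r : ℝ) := by
      refine (ae_map_iff hf.aemeasurable hcl).2 ?_
      refine (ae_restrict_iff' (DD_meas r n)).2 (Filter.Eventually.of_forall ?_)
      rintro G ⟨_, hG⟩
      refine ⟨?_, ?_, ?_⟩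
      · simp only [f, Matrix.transpose_mul, Matrix.transpose_transpose, colproj_symm,
          Matrix.mul_assoc]
      · calc U * colproj (Matrix.of G) * Uᵀ * (U * colproj (Matrix.of G) * Uᵀ)
            = U * colproj (Matrix.of G) * (Uᵀ * U) * colproj (Matrix.of G) * Uᵀ := by
              simp only [Matrix.mul_assoc]
          _ = U * (colproj (Matrix.of G) * colproj (Matrix.of G)) * Uᵀ := by
              rw [hU2]; simp only [Matrix.mul_assoc, Matrix.one_mul]
          _ = _ := by rw [colproj_idem hG]
      · show (U * colproj (Matrix.of G) * Uᵀ).trace = (r : ℝ)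
        rw [Matrix.trace_mul_comm, ← Matrix.mul_assoc, hU2, Matrix.one_mul, colproj_trace hG,
          Fintype.card_fin]
    filter_upwards [h1] with P hP
    obtain ⟨hp1, hp2, hp3⟩ := hP
    have hH : P.IsHermitian := hp1
    obtain ⟨V, hV1, hV2, hV3⟩ := proj_orbit hH hp2 (proj_rank_of_trace hH hp2 hp3) hcard
    refine ⟨V * Uᵀ, ?_, ?_, ?_⟩
    · calc V * Uᵀ * (V * Uᵀ)ᵀ = V * (Uᵀ * U) * Vᵀ := by
            simp only [Matrix.transpose_mul, Matrix.transpose_transpose, Matrix.mul_assoc]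
        _ = 1 := by rw [hU2, Matrix.mul_one, hV1]
    · calc (V * Uᵀ)ᵀ * (V * Uᵀ) = U * (Vᵀ * V) * Uᵀ := by
            simp only [Matrix.transpose_mul, Matrix.transpose_transpose, Matrix.mul_assoc]
        _ = 1 := by rw [hV2, Matrix.mul_one, hU1]
    · rw [hP₀, hV3]
      calc V * EE r n * Vᵀ = V * (Uᵀ * U) * EE r n * (Uᵀ * U) * Vᵀ := by
            rw [hU2, Matrix.mul_one, Matrix.mul_one]
        _ = _ := by
            simp only [Matrix.transpose_mul, Matrix.transpose_transpose, Matrix.mul_assoc]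
  have huniq := invariant_unique P₀ μ ν hμ hνinv hμE hνE A hA
  have hνuniv : ν Set.univ ≤ ENNReal.ofReal (5 ^ (r * (r + n))) * b := by
    show (m.map f) Set.univ ≤ _
    rw [Measure.map_apply hf MeasurableSet.univ]
    simpa [m] using DD_vol r n
  have hSig' : (Uᵀ * Sig * U).PosSemidef := hSig.conjTranspose_mul_mul_same U
  have hνA : ENNReal.ofReal (|S.det| ^ r * |T.det| ^ n) * b ≤ ν A := by
    show _ ≤ (m.map f) A
    rw [Measure.map_apply hf hA, Measure.restrict_apply (hf hA)]
    refine good_vol hSig' ht hS1 hT1 hSA hTB _ ((hf hA).inter (DD_meas r n)) ?_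
    intro G hGD hG
    refine ⟨?_, hGD⟩
    intro x
    have e : (P₀ - f G) *ᵥ x = U *ᵥ ((EE r n - colproj (Matrix.of G)) *ᵥ (Uᵀ *ᵥ x)) := by
      rw [Matrix.mulVec_mulVec, Matrix.mulVec_mulVec]
      congr 1
      rw [hP₀]
      simp only [f, Matrix.mul_sub, Matrix.sub_mul]
    have h := hG (Uᵀ *ᵥ x)
    rw [orth_ctr (V := Uᵀ) (by simpa using hU1)] at h
    rw [e]
    refine le_trans (le_of_eq ?_) h
    generalize (EE r n - colproj (Matrix.of G)) *ᵥ (Uᵀ *ᵥ x) = y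
    rw [← Matrix.mulVec_mulVec, ← Matrix.mulVec_mulVec, Matrix.dotProduct_mulVec y,
      Matrix.vecMul_transpose]
  rw [huniq] at hνA
  have h3 : ENNReal.ofReal (|S.det| ^ r * |T.det| ^ n) * b ≤
      (ENNReal.ofReal (5 ^ (r * (r + n))) * μ A) * b := by
    refine hνA.trans ?_
    calc ν Set.univ * μ A ≤ (ENNReal.ofReal (5 ^ (r * (r + n))) * b) * μ A :=
          mul_le_mul_left hνuniv _
      _ = _ := by ring
  exact (ENNReal.mul_le_mul_iff_left hb0 hbt).1 h3

/-- Comparison of the number of eigenvalues above a threshold for a compression. -/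
theorem count_le {d n : ℕ} {Sig : Matrix (Fin d) (Fin d) ℝ} (hSig : Sig.IsHermitian)
    {W : Matrix (Fin d) (Fin n) ℝ} (hW : Wᵀ * W = 1) {A : Matrix (Fin n) (Fin n) ℝ}
    (hA : A.IsHermitian) (hAW : A = Wᵀ * Sig * W) (t : ℝ) :
    Fintype.card {i // t < hA.eigenvalues i} ≤ Fintype.card {k // t < hSig.eigenvalues k} := by
  classical
  obtain ⟨V, hV1, hV2, hV3⟩ := spectral_real hA
  obtain ⟨Z, hZ1, hZ2, hZ3⟩ := spectral_real hSig
  set a := hA.eigenvalues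
  set l := hSig.eigenvalues
  by_contra hcon
  push Not at hcon
  let ext : ({i // t < a i} → ℝ) →ₗ[ℝ] (Fin n → ℝ) :=
    { toFun := fun y i => if h : t < a i then y ⟨i, h⟩ else 0
      map_add' := by intro x y; funext i; by_cases h : t < a i <;> simp [h]
      map_smul' := by intro c y; funext i; by_cases h : t < a i <;> simp [h] }
  let res : (Fin d → ℝ) →ₗ[ℝ] ({k // t < l k} → ℝ) :=
    LinearMap.funLeft ℝ ℝ Subtype.val
  let L := res ∘ₗ (Zᵀ * W * V).mulVecLin ∘ₗ ext
  have hker : LinearMap.ker L ≠ ⊥ := by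
    apply LinearMap.ker_ne_bot_of_finrank_lt
    simpa using hcon
  obtain ⟨y, hy, hy0⟩ := (Submodule.ne_bot_iff _).1 hker
  have hLy : L y = 0 := hy
  set w := ext y with hw
  set z := (Zᵀ * W * V) *ᵥ w with hz
  have hzk : ∀ k, t < l k → z k = 0 := fun k hk => congrFun hLy ⟨k, hk⟩
  have hwi : ∀ i, ¬ t < a i → w i = 0 := by
    intro i hi
    simp [hw, ext, hi]
  have hM : (Zᵀ * W * V)ᵀ * (Zᵀ * W * V) = 1 := by
    calc (Zᵀ * W * V)ᵀ * (Zᵀ * W * V) = Vᵀ * (Wᵀ * (Z * Zᵀ) * W) * V := by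
          simp only [Matrix.transpose_mul, Matrix.transpose_transpose, Matrix.mul_assoc]
      _ = 1 := by rw [hZ1, Matrix.mul_one, hW, Matrix.mul_one, hV2]
  have hzz : z ⬝ᵥ z = w ⬝ᵥ w := by
    rw [hz, Matrix.dotProduct_mulVec, ← Matrix.mulVec_transpose, Matrix.mulVec_mulVec, hM,
      Matrix.one_mulVec]
  have hD : (Zᵀ * W * V)ᵀ * Matrix.diagonal l * (Zᵀ * W * V) = Matrix.diagonal a := by
    calc (Zᵀ * W * V)ᵀ * Matrix.diagonal l * (Zᵀ * W * V)
        = Vᵀ * (Wᵀ * (Z * Matrix.diagonal l * Zᵀ) * W) * V := by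
          simp only [Matrix.transpose_mul, Matrix.transpose_transpose, Matrix.mul_assoc]
      _ = Vᵀ * (V * Matrix.diagonal a * Vᵀ) * V := by rw [← hZ3, ← hAW, ← hV3]
      _ = (Vᵀ * V) * Matrix.diagonal a * (Vᵀ * V) := by simp only [Matrix.mul_assoc]
      _ = _ := by rw [hV2, Matrix.one_mul, Matrix.mul_one]
  have hq : z ⬝ᵥ (Matrix.diagonal l *ᵥ z) = w ⬝ᵥ (Matrix.diagonal a *ᵥ w) := by
    rw [← hD, ← Matrix.mulVec_mulVec, ← hz, ← Matrix.mulVec_mulVec, Matrix.dotProduct_mulVec w,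
      Matrix.vecMul_transpose, ← hz]
  have h1 : z ⬝ᵥ (Matrix.diagonal l *ᵥ z) ≤ t * (z ⬝ᵥ z) := by
    simp only [dotProduct, Matrix.mulVec_diagonal, Finset.mul_sum]
    refine Finset.sum_le_sum fun k _ => ?_
    by_cases h : t < l k
    · simp [hzk k h]
    · push Not at h
      nlinarith [mul_self_nonneg (z k)]
  have h2 : t * (w ⬝ᵥ w) < w ⬝ᵥ (Matrix.diagonal a *ᵥ w) := by
    obtain ⟨i, hi⟩ : ∃ i, y i ≠ 0 := by
      by_contra h; push Not at h; exact hy0 (funext h)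
    simp only [dotProduct, Matrix.mulVec_diagonal, Finset.mul_sum]
    refine Finset.sum_lt_sum (fun k _ => ?_) ⟨i.1, Finset.mem_univ _, ?_⟩
    · by_cases h : t < a k
      · nlinarith [mul_self_nonneg (w k)]
      · simp [hwi k h]
    · have : w i.1 = y i := by simp [hw, ext, i.2]
      rw [this]
      have := mul_self_pos.2 hi
      nlinarith [i.2]
  rw [hzz, hq] at h1
  linarith

theorem eigDesc_perm {m : ℕ} {G : Matrix (Fin m) (Fin m) ℝ} (h : G.IsHermitian) :
    Antitone (eigDesc G) ∧ ∃ s : Equiv.Perm (Fin m), ∀ k, eigDesc G k = h.eigenvalues (s k) := by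
  have e : eigDesc G = fun k => (h.eigenvalues ∘ Tuple.sort h.eigenvalues) k.rev := by
    unfold eigDesc; rw [dif_pos h]
  rw [e]
  refine ⟨fun i j hij => Tuple.monotone_sort h.eigenvalues (Fin.rev_le_rev.2 hij),
    Fin.revPerm.trans (Tuple.sort h.eigenvalues), fun k => rfl⟩

theorem eigDesc_le {d n : ℕ} {Sig : Matrix (Fin d) (Fin d) ℝ} (hSig : Sig.IsHermitian)
    {W : Matrix (Fin d) (Fin n) ℝ} (hW : Wᵀ * W = 1) {A : Matrix (Fin n) (Fin n) ℝ}
    (hA : A.IsHermitian) (hAW : A = Wᵀ * Sig * W) (hnd : n ≤ d) (k : Fin n) :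
    eigDesc A k ≤ eigDesc Sig (Fin.castLE hnd k) := by
  classical
  obtain ⟨ha, s, hs⟩ := eigDesc_perm hA
  obtain ⟨hl, u, hu⟩ := eigDesc_perm hSig
  by_contra hcon
  push Not at hcon
  set t := eigDesc Sig (Fin.castLE hnd k) with ht
  have hc := count_le hSig hW hA hAW t
  have e1 : Fintype.card {i // t < hA.eigenvalues i} = Fintype.card {i // t < eigDesc A i} :=
    (Fintype.card_congr (s.subtypeEquiv fun i => by rw [hs])).symm
  have e2 : Fintype.card {i // t < hSig.eigenvalues i} = Fintype.card {i // t < eigDesc Sig i} :=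
    (Fintype.card_congr (u.subtypeEquiv fun i => by rw [hu])).symm
  rw [e1, e2, Fintype.card_subtype, Fintype.card_subtype] at hc
  have h1 : (Finset.Iic k).card ≤ (Finset.univ.filter fun i => t < eigDesc A i).card := by
    refine Finset.card_le_card fun i hi => ?_
    rw [Finset.mem_Iic] at hi
    exact Finset.mem_filter.2 ⟨Finset.mem_univ _, hcon.trans_le (ha hi)⟩
  have h2 : (Finset.univ.filter fun i => t < eigDesc Sig i).card ≤
      (Finset.Iio (Fin.castLE hnd k)).card := by
    refine Finset.card_le_card fun i hi => ?_
    have hi := (Finset.mem_filter.1 hi).2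
    rw [Finset.mem_Iio]
    by_contra h
    push Not at h
    exact absurd (hl h) (not_le.2 hi)
  rw [Fin.card_Iic] at h1
  rw [Fin.card_Iio] at h2
  simp only [Fin.val_castLE] at h2
  omega

theorem sum_eig_le {d n : ℕ} {Sig : Matrix (Fin d) (Fin d) ℝ} (hSig : Sig.IsHermitian)
    {W : Matrix (Fin d) (Fin n) ℝ} (hW : Wᵀ * W = 1) {A : Matrix (Fin n) (Fin n) ℝ}
    (hA : A.IsHermitian) (hAW : A = Wᵀ * Sig * W) (hnd : n ≤ d) (f : ℝ → ℝ) (hf : Monotone f) :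
    ∑ i, f (hA.eigenvalues i) ≤
      ∑ k ∈ Finset.univ.filter (fun k : Fin d => (k : ℕ) < n), f (eigDesc Sig k) := by
  obtain ⟨ha, s, hs⟩ := eigDesc_perm hA
  have e1 : ∑ i, f (hA.eigenvalues i) = ∑ i, f (eigDesc A i) := by
    simp only [hs]
    exact (Equiv.sum_comp s fun i => f (hA.eigenvalues i)).symm
  have e2 : ∑ k ∈ Finset.univ.filter (fun k : Fin d => (k : ℕ) < n), f (eigDesc Sig k) =
      ∑ i : Fin n, f (eigDesc Sig (Fin.castLE hnd i)) := by
    symm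
    refine Finset.sum_bij (fun i _ => Fin.castLE hnd i) ?_ ?_ ?_ ?_
    · intro i _; simp
    · intro i _ j _ h; exact Fin.castLE_injective hnd h
    · intro k hk
      exact ⟨⟨k, (Finset.mem_filter.1 hk).2⟩, Finset.mem_univ _, rfl⟩
    · intro i _; rfl
  rw [e1, e2]
  exact Finset.sum_le_sum fun i _ => hf (eigDesc_le hSig hW hA hAW hnd i)

theorem opNorm_le_of_quad {d : ℕ} {Sig M : Matrix (Fin d) (Fin d) ℝ} (hSig : Sig.PosSemidef)
    {ε : ℝ} (hε : 0 < ε)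
    (h : ∀ x : Fin d → ℝ, (M *ᵥ x) ⬝ᵥ (Sig *ᵥ (M *ᵥ x)) ≤ ε ^ 2 * (x ⬝ᵥ x)) :
    opNorm (CFC.sqrt Sig * M) ≤ ε := by
  have h0 : (0 : Matrix (Fin d) (Fin d) ℝ) ≤ Sig := hSig.nonneg
  have hs : CFC.sqrt Sig * CFC.sqrt Sig = Sig := CFC.sqrt_mul_sqrt_self Sig h0
  have hsym : (CFC.sqrt Sig)ᵀ = CFC.sqrt Sig := by
    have : (CFC.sqrt Sig).PosSemidef := Matrix.nonneg_iff_posSemidef.1 (CFC.sqrt_nonneg Sig)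
    exact this.1
  unfold opNorm
  refine csSup_le ⟨_, 0, by simp, rfl⟩ ?_
  rintro t ⟨x, hx, rfl⟩
  rw [Real.sqrt_le_iff]
  refine ⟨hε.le, ?_⟩
  have e : ∑ i, ((CFC.sqrt Sig * M).mulVec x i) ^ 2 = (M *ᵥ x) ⬝ᵥ (Sig *ᵥ (M *ᵥ x)) := by
    have e1 : ∑ i, ((CFC.sqrt Sig * M).mulVec x i) ^ 2 =
        (CFC.sqrt Sig *ᵥ (M *ᵥ x)) ⬝ᵥ (CFC.sqrt Sig *ᵥ (M *ᵥ x)) := by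
      rw [Matrix.mulVec_mulVec]
      simp only [dotProduct, sq]
    rw [e1]
    nth_rewrite 3 [← hs]
    rw [← Matrix.mulVec_mulVec, Matrix.dotProduct_mulVec (M *ᵥ x), ← Matrix.mulVec_transpose, hsym]
  rw [e]
  refine (h x).trans ?_
  have hxx : x ⬝ᵥ x = ∑ j, x j ^ 2 := by simp only [dotProduct, sq]
  rw [hxx]
  nlinarith [sq_nonneg ε]

theorem negLog_le {p q : ℝ} (hp : 0 < p) (hq : 0 < q) {m : ℝ≥0∞} (hm : m ≠ ⊤)
    (h : ENNReal.ofReal p ≤ ENNReal.ofReal q * m) {R : ℝ} (hR : Real.log q - Real.log p ≤ R) :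
    negLog m ≤ ENNReal.ofReal R := by
  have hm0 : m ≠ 0 := by
    rintro rfl
    rw [mul_zero] at h
    have := ENNReal.ofReal_pos.2 hp
    exact absurd h (not_le.2 this)
  unfold negLog
  rw [if_neg hm0]
  apply ENNReal.ofReal_le_ofReal
  refine le_trans ?_ hR
  have hmp : 0 < m.toReal := ENNReal.toReal_pos hm0 hm
  rw [← ENNReal.ofReal_toReal hm, ← ENNReal.ofReal_mul hq.le] at h
  have h' := (ENNReal.ofReal_le_ofReal_iff (by positivity)).1 h
  have := Real.log_le_log hp h'
  rw [Real.log_mul hq.ne' hmp.ne'] at this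
  rw [one_div, Real.log_inv]
  linarith


/-- The set of projections close to `P₀` in quadratic form. -/
def QS {d : ℕ} (Sig P₀ : Matrix (Fin d) (Fin d) ℝ) (ε : ℝ) : Set (Matrix (Fin d) (Fin d) ℝ) :=
  {P | ∀ x, ((P₀ - P) *ᵥ x) ⬝ᵥ (Sig *ᵥ ((P₀ - P) *ᵥ x)) ≤ ε ^ 2 * (x ⬝ᵥ x)}

theorem log_sqrt_bound {t a ε : ℝ} (hε : 0 < ε) (ht : t = ε ^ 2 / 2) :
    -Real.log (√(t / max a t)) ≤ 1 / 2 * Real.log (2 * max a (ε ^ 2) / ε ^ 2) := by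
  have hε2 : 0 < ε ^ 2 := by positivity
  have ht0 : 0 < t := by rw [ht]; positivity
  have hm : 0 < max a t := lt_max_of_lt_right ht0
  have h1 : -Real.log (√(t / max a t)) = 1 / 2 * Real.log (max a t / t) := by
    rw [Real.log_sqrt (by positivity), ← inv_div (max a t) t, Real.log_inv]
    ring
  rw [h1]
  have h2 : max a t / t ≤ 2 * max a (ε ^ 2) / ε ^ 2 := by
    have e : max a t / t = 2 * max a t / ε ^ 2 := by
      rw [ht]; field_simp
    rw [e]
    have : max a t ≤ max a (ε ^ 2) := max_le_max_left _ (by rw [ht]; linarith)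
    gcongr
  have := Real.log_le_log (by positivity) h2
  linarith

theorem log_det_bound {n : ℕ} {a : Fin n → ℝ} {D t ε : ℝ} (hε : 0 < ε) (ht : t = ε ^ 2 / 2)
    (hD : D = ∏ i, √(t / max (a i) t)) :
    0 < D ∧ -Real.log D ≤ 1 / 2 * ∑ i, Real.log (2 * max (a i) (ε ^ 2) / ε ^ 2) := by
  have ht0 : 0 < t := by rw [ht]; positivity
  have hpos : ∀ i, 0 < √(t / max (a i) t) := fun i =>
    Real.sqrt_pos.2 (div_pos ht0 (lt_max_of_lt_right ht0))
  refine ⟨hD ▸ Finset.prod_pos fun i _ => hpos i, ?_⟩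
  rw [hD, Real.log_prod (fun i _ => (hpos i).ne'), ← Finset.sum_neg_distrib, Finset.mul_sum]
  exact Finset.sum_le_sum fun i _ => log_sqrt_bound hε ht

theorem sum_log_split {d n : ℕ} (hn : n ≤ d) (l : Fin d → ℝ) {ε : ℝ} (hε : 0 < ε) :
    ∑ k ∈ Finset.univ.filter (fun k : Fin d => (k : ℕ) < n),
      Real.log (50 * max (l k) (ε ^ 2) / ε ^ 2) = n * Real.log 25 +
    ∑ k ∈ Finset.univ.filter (fun k : Fin d => (k : ℕ) < n),
      Real.log (2 * max (l k) (ε ^ 2) / ε ^ 2) := by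
  have hε2 : 0 < ε ^ 2 := by positivity
  have e : ∀ k, Real.log (50 * max (l k) (ε ^ 2) / ε ^ 2) =
      Real.log 25 + Real.log (2 * max (l k) (ε ^ 2) / ε ^ 2) := by
    intro k
    have : 0 < max (l k) (ε ^ 2) := lt_max_of_lt_right hε2
    rw [← Real.log_mul (by norm_num) (by positivity)]
    congr 1
    ring
  have hc : (Finset.univ.filter (fun k : Fin d => (k : ℕ) < n)).card = n := by
    rw [Fin.card_filter_val_lt, min_eq_right hn]
  simp only [e]
  rw [Finset.sum_add_distrib, Finset.sum_const, hc, nsmul_eq_mul]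

theorem core {d r n : ℕ} (hd : d = r + n) (hrn : r ≤ n)
    {U : Matrix (Fin d) (Fin r ⊕ Fin n) ℝ} (hU1 : U * Uᵀ = 1) (hU2 : Uᵀ * U = 1)
    {P₀ : Matrix (Fin d) (Fin d) ℝ} (hP₀ : P₀ = U * EE r n * Uᵀ)
    (μ : Measure (Matrix (Fin d) (Fin d) ℝ)) [IsProbabilityMeasure μ]
    (hμ : ∀ Q : Matrix (Fin d) (Fin d) ℝ, Q * Qᵀ = 1 → Qᵀ * Q = 1 →
      Measure.map (fun P => Q * P * Qᵀ) μ = μ)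
    (hμE : ∀ᵐ P ∂μ, ∃ Q : Matrix (Fin d) (Fin d) ℝ, Q * Qᵀ = 1 ∧ Qᵀ * Q = 1 ∧ P = Q * P₀ * Qᵀ)
    {Sig : Matrix (Fin d) (Fin d) ℝ} (hSig : Sig.PosSemidef) {ε : ℝ} (hε : 0 < ε) :
    negLog (μ (QS Sig P₀ ε)) ≤ ENNReal.ofReal ((n : ℝ) / 2 *
              ∑ k ∈ Finset.univ.filter (fun k : Fin d => (k : ℕ) < r),
                Real.log (50 * max (eigDesc Sig k) (ε ^ 2) / ε ^ 2) +
            (r : ℝ) / 2 *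
              ∑ k ∈ Finset.univ.filter (fun k : Fin d => (k : ℕ) < n),
                Real.log (50 * max (eigDesc Sig k) (ε ^ 2) / ε ^ 2)) := by
  obtain ⟨t, ht⟩ : ∃ t, t = ε ^ 2 / 2 := ⟨_, rfl⟩
  have ht0 : 0 < t := by rw [ht]; positivity
  have hSig' : (Uᵀ * Sig * U).IsHermitian := (hSig.conjTranspose_mul_mul_same U).1
  have hA : ((Uᵀ * Sig * U).toBlocks₂₂).IsHermitian := hSig'.submatrix Sum.inr
  have hB : ((Uᵀ * Sig * U).toBlocks₁₁).IsHermitian := hSig'.submatrix Sum.inl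
  obtain ⟨S, hS1, hSA, hSd⟩ := exists_shrink hA t ht0
  obtain ⟨T, hT1, hTB, hTd⟩ := exists_shrink hB t ht0
  have hmain := main_measure (by simpa using hd) hU1 hU2 hP₀ μ hμ hμE hSig ht0.le hS1 hT1 hSA hTB
  have h2t : 2 * t = ε ^ 2 := by rw [ht]; ring
  rw [h2t] at hmain
  obtain ⟨hSp, hSl⟩ := log_det_bound hε ht hSd
  obtain ⟨hTp, hTl⟩ := log_det_bound hε ht hTd
  have hmono : Monotone fun x : ℝ => Real.log (2 * max x (ε ^ 2) / ε ^ 2) := by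
    intro x y hxy
    have hε2 : 0 < ε ^ 2 := by positivity
    have : 0 < max x (ε ^ 2) := lt_max_of_lt_right hε2
    refine Real.log_le_log (by positivity) ?_
    have := max_le_max_right (ε ^ 2) hxy
    gcongr
  have hW2 : (U.submatrix id Sum.inr)ᵀ * (U.submatrix id Sum.inr) = (1 : Matrix (Fin n) (Fin n) ℝ) := by
    have := congrArg Matrix.toBlocks₂₂ hU2
    rw [← Matrix.fromBlocks_one, Matrix.toBlocks_fromBlocks₂₂] at this
    exact this
  have hW1 : (U.submatrix id Sum.inl)ᵀ * (U.submatrix id Sum.inl) = (1 : Matrix (Fin r) (Fin r) ℝ) := by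
    have := congrArg Matrix.toBlocks₁₁ hU2
    rw [← Matrix.fromBlocks_one, Matrix.toBlocks_fromBlocks₁₁] at this
    exact this
  have hsA := sum_eig_le hSig.1 hW2 hA (by ext i j; rfl) (by omega) _ hmono
  have hsB := sum_eig_le hSig.1 hW1 hB (by ext i j; rfl) (by omega) _ hmono
  refine negLog_le (p := |S.det| ^ r * |T.det| ^ n) (q := 5 ^ (r * (r + n))) (by positivity)
    (by positivity) (measure_ne_top _ _) hmain ?_
  rw [sum_log_split (by omega) _ hε, sum_log_split (by omega) _ hε]
  rw [Real.log_mul (by positivity) (by positivity), Real.log_pow, Real.log_pow, Real.log_pow]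
  have h25 : Real.log 25 = 2 * Real.log 5 := by
    rw [show (25 : ℝ) = 5 ^ 2 by norm_num, Real.log_pow]; norm_num
  have h5 : 0 < Real.log 5 := Real.log_pos (by norm_num)
  rw [h25]
  push_cast
  have hr0 : (0 : ℝ) ≤ r := Nat.cast_nonneg r
  have hn0 : (0 : ℝ) ≤ n := Nat.cast_nonneg n
  have hrn' : (r : ℝ) ≤ n := Nat.cast_le.2 hrn
  have i1 := mul_le_mul_of_nonneg_left (hSl.trans (mul_le_mul_of_nonneg_left hsA (by norm_num))) hr0
  have i2 := mul_le_mul_of_nonneg_left (hTl.trans (mul_le_mul_of_nonneg_left hsB (by norm_num))) hn0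
  have i3 : (r : ℝ) * (r + n) * Real.log 5 ≤ r * (n + n) * Real.log 5 := by gcongr
  linarith

theorem QS_subset {d : ℕ} {Sig P₀ : Matrix (Fin d) (Fin d) ℝ} (hSig : Sig.PosSemidef) {ε : ℝ}
    (hε : 0 < ε) : QS Sig P₀ ε ⊆ {P | opNorm (CFC.sqrt Sig * (P₀ - P)) ≤ ε} :=
  fun _ hP => opNorm_le_of_quad hSig hε hP

theorem negLog_anti {p q : ℝ≥0∞} (h : p ≤ q) (hq : q ≠ ⊤) : negLog q ≤ negLog p := by
  unfold negLog
  by_cases hp : p = 0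
  · rw [if_pos hp]; exact le_top
  · have hq0 : q ≠ 0 := fun e => hp (le_antisymm (e ▸ h) bot_le)
    rw [if_neg hp, if_neg hq0]
    apply ENNReal.ofReal_le_ofReal
    have hpt : p ≠ ⊤ := ne_top_of_le_ne_top hq h
    have h0 := ENNReal.toReal_pos hp hpt
    have h1 := ENNReal.toReal_mono hq h
    have h2 : 0 < q.toReal := h0.trans_le h1
    exact Real.log_le_log (by positivity) (one_div_le_one_div_of_le h0 h1)

theorem EE_swap {d r n : ℕ} {U : Matrix (Fin d) (Fin r ⊕ Fin n) ℝ} (hU1 : U * Uᵀ = 1) :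
    1 - U * EE r n * Uᵀ =
      U.submatrix id Sum.swap * EE n r * (U.submatrix id (Sum.swap : Fin n ⊕ Fin r → _))ᵀ := by
  have e : EE n r = (1 - EE r n).submatrix Sum.swap Sum.swap := by
    ext i j
    rcases i with i | i <;> rcases j with j | j <;>
      simp [EE, Matrix.one_apply]
  have e1 : U.submatrix id Sum.swap * EE n r * (U.submatrix id (Sum.swap : Fin n ⊕ Fin r → _))ᵀ =
      U * (1 - EE r n) * Uᵀ := by
    rw [e, Matrix.transpose_submatrix]
    have := Matrix.submatrix_mul_equiv U (1 - EE r n) id (Equiv.sumComm (Fin n) (Fin r))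
      (Sum.swap : Fin n ⊕ Fin r → _)
    simp only [Equiv.sumComm_apply] at this
    rw [show (Sum.swap : Fin n ⊕ Fin r → Fin r ⊕ Fin n) = ⇑(Equiv.sumComm (Fin n) (Fin r)) from rfl,
      Matrix.submatrix_mul_equiv, Matrix.submatrix_mul_equiv, Matrix.submatrix_id_id]
  rw [e1, Matrix.mul_sub, Matrix.sub_mul, Matrix.mul_one, hU1]

theorem core_all {d r n : ℕ} (hd : d = r + n)
    {U : Matrix (Fin d) (Fin r ⊕ Fin n) ℝ} (hU1 : U * Uᵀ = 1) (hU2 : Uᵀ * U = 1)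
    {P₀ : Matrix (Fin d) (Fin d) ℝ} (hP₀ : P₀ = U * EE r n * Uᵀ)
    (μ : Measure (Matrix (Fin d) (Fin d) ℝ)) [IsProbabilityMeasure μ]
    (hμ : ∀ Q : Matrix (Fin d) (Fin d) ℝ, Q * Qᵀ = 1 → Qᵀ * Q = 1 →
      Measure.map (fun P => Q * P * Qᵀ) μ = μ)
    (hμE : ∀ᵐ P ∂μ, ∃ Q : Matrix (Fin d) (Fin d) ℝ, Q * Qᵀ = 1 ∧ Qᵀ * Q = 1 ∧ P = Q * P₀ * Qᵀ)
    {Sig : Matrix (Fin d) (Fin d) ℝ} (hSig : Sig.PosSemidef) {ε : ℝ} (hε : 0 < ε) :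
    negLog (μ (QS Sig P₀ ε)) ≤ ENNReal.ofReal ((n : ℝ) / 2 *
              ∑ k ∈ Finset.univ.filter (fun k : Fin d => (k : ℕ) < r),
                Real.log (50 * max (eigDesc Sig k) (ε ^ 2) / ε ^ 2) +
            (r : ℝ) / 2 *
              ∑ k ∈ Finset.univ.filter (fun k : Fin d => (k : ℕ) < n),
                Real.log (50 * max (eigDesc Sig k) (ε ^ 2) / ε ^ 2)) := by
  rcases le_total r n with hrn | hnr
  · exact core hd hrn hU1 hU2 hP₀ μ hμ hμE hSig hε
  let φ : Matrix (Fin d) (Fin d) ℝ ≃ᵐ Matrix (Fin d) (Fin d) ℝ :=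
    (Homeomorph.subLeft (1 : Matrix (Fin d) (Fin d) ℝ)).toMeasurableEquiv
  have hφ : ∀ P, φ P = 1 - P := fun P => rfl
  have hconj : ∀ Q : Matrix (Fin d) (Fin d) ℝ,
      Measurable fun P : Matrix (Fin d) (Fin d) ℝ => Q * P * Qᵀ :=
    fun Q => Continuous.measurable (by fun_prop)
  have hc1 : ∀ Q P : Matrix (Fin d) (Fin d) ℝ, Q * Qᵀ = 1 →
      Q * (1 - P) * Qᵀ = 1 - Q * P * Qᵀ := by
    intro Q P hQ
    rw [Matrix.mul_sub, Matrix.sub_mul, Matrix.mul_one, hQ]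
  haveI : IsProbabilityMeasure (μ.map φ) := Measure.isProbabilityMeasure_map φ.measurable.aemeasurable
  have hinv : ∀ Q : Matrix (Fin d) (Fin d) ℝ, Q * Qᵀ = 1 → Qᵀ * Q = 1 →
      Measure.map (fun P => Q * P * Qᵀ) (μ.map φ) = μ.map φ := by
    intro Q hQ1 hQ2
    rw [Measure.map_map (hconj Q) φ.measurable]
    have : (fun P => Q * P * Qᵀ) ∘ φ = φ ∘ fun P => Q * P * Qᵀ := by
      funext P
      exact hc1 Q P hQ1
    rw [this, ← Measure.map_map φ.measurable (hconj Q), hμ Q hQ1 hQ2]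
  have hae : ∀ᵐ P ∂(μ.map φ), ∃ Q : Matrix (Fin d) (Fin d) ℝ,
      Q * Qᵀ = 1 ∧ Qᵀ * Q = 1 ∧ P = Q * (1 - P₀) * Qᵀ := by
    rw [φ.measurableEmbedding.ae_map_iff]
    filter_upwards [hμE] with P hP
    obtain ⟨Q, h1, h2, h3⟩ := hP
    exact ⟨Q, h1, h2, by rw [hφ, hc1 Q _ h1, h3]⟩
  have hU1' : U.submatrix id Sum.swap * (U.submatrix id (Sum.swap : Fin n ⊕ Fin r → _))ᵀ = 1 := by
    rw [show (Sum.swap : Fin n ⊕ Fin r → Fin r ⊕ Fin n) = ⇑(Equiv.sumComm (Fin n) (Fin r)) from rfl,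
      Matrix.transpose_submatrix, Matrix.submatrix_mul_equiv, Matrix.submatrix_id_id, hU1]
  have hU2' : (U.submatrix id (Sum.swap : Fin n ⊕ Fin r → _))ᵀ * U.submatrix id Sum.swap = 1 := by
    rw [show (Sum.swap : Fin n ⊕ Fin r → Fin r ⊕ Fin n) = ⇑(Equiv.sumComm (Fin n) (Fin r)) from rfl,
      Matrix.transpose_submatrix]
    have := Matrix.submatrix_mul_equiv Uᵀ U (Equiv.sumComm (Fin n) (Fin r)) (Equiv.refl (Fin d))
      (Equiv.sumComm (Fin n) (Fin r))
    rw [hU2, Matrix.submatrix_one_equiv] at this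
    exact this
  have key := core (by omega) hnr hU1' hU2' (hP₀ ▸ EE_swap hU1) (μ.map φ) hinv hae hSig hε
  rw [φ.map_apply] at key
  have hset : φ ⁻¹' (QS Sig (1 - P₀) ε) = QS Sig P₀ ε := by
    ext P
    have e : 1 - P₀ - φ P = -(P₀ - P) := by rw [hφ]; abel
    show (∀ x, ((1 - P₀ - φ P) *ᵥ x) ⬝ᵥ (Sig *ᵥ ((1 - P₀ - φ P) *ᵥ x)) ≤ ε ^ 2 * (x ⬝ᵥ x)) ↔
      ∀ x, ((P₀ - P) *ᵥ x) ⬝ᵥ (Sig *ᵥ ((P₀ - P) *ᵥ x)) ≤ ε ^ 2 * (x ⬝ᵥ x)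
    rw [e]
    simp only [Matrix.neg_mulVec, Matrix.mulVec_neg, neg_dotProduct, dotProduct_neg, neg_neg]
  rw [hset, add_comm] at key
  exact key

/-- **Ellipsoidal Covering of the Grassmannian (Lemma).** -/
theorem ellipsoidal_covering_of_grassmannian :
    ∃ C : ℝ, 0 < C ∧
      ∀ (d r : ℕ), 1 ≤ r → r ≤ d →
      ∀ (μ : Measure (Matrix (Fin d) (Fin d) ℝ)), IsProbabilityMeasure μ →
      -- `μ` lives on the Grassmannian: the rank-`r` orthogonal projection matrices
      μ {P | ¬ (P.IsSymm ∧ P * P = P ∧ P.rank = r)} = 0 →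
      -- `μ` is invariant under conjugation by every orthogonal matrix
      (∀ Q : Matrix (Fin d) (Fin d) ℝ, Q * Qᵀ = 1 → Qᵀ * Q = 1 →
        Measure.map (fun P => Q * P * Qᵀ) μ = μ) →
      ∀ P₀ : Matrix (Fin d) (Fin d) ℝ, P₀.IsSymm → P₀ * P₀ = P₀ → P₀.rank = r →
      ∀ ε : ℝ, 0 < ε →
      ∀ (Sig : Matrix (Fin d) (Fin d) ℝ) (hSig : Sig.PosSemidef),
      negLog (μ {P | opNorm (CFC.sqrt Sig * (P₀ - P)) ≤ ε}) ≤
        ENNReal.ofReal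
          (((d - r : ℕ) : ℝ) / 2 *
              ∑ k ∈ Finset.univ.filter (fun k : Fin d => (k : ℕ) < r),
                Real.log (C * max (eigDesc Sig k) (ε ^ 2) / ε ^ 2) +
            (r : ℝ) / 2 *
              ∑ k ∈ Finset.univ.filter (fun k : Fin d => (k : ℕ) < d - r),
                Real.log (C * max (eigDesc Sig k) (ε ^ 2) / ε ^ 2)) := by
  refine ⟨50, by norm_num, ?_⟩
  intro d r _ hrd μ hμp hμG hμ P₀ hs hi hr ε hε Sig hSig
  have hd : d = r + (d - r) := by omega
  have hcard : Fintype.card (Fin d) = r + (d - r) := by simpa using hd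
  obtain ⟨U, hU1, hU2, hP₀⟩ := proj_orbit (n := d - r) (show P₀.IsHermitian from hs) hi hr hcard
  have hμE : ∀ᵐ P ∂μ, ∃ Q : Matrix (Fin d) (Fin d) ℝ,
      Q * Qᵀ = 1 ∧ Qᵀ * Q = 1 ∧ P = Q * P₀ * Qᵀ := by
    have h1 : ∀ᵐ P ∂μ, P.IsSymm ∧ P * P = P ∧ P.rank = r := hμG
    filter_upwards [h1] with P hP
    obtain ⟨hp1, hp2, hp3⟩ := hP
    obtain ⟨V, hV1, hV2, hV3⟩ := proj_orbit (n := d - r) (show P.IsHermitian from hp1) hp2 hp3 hcard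
    refine ⟨V * Uᵀ, ?_, ?_, ?_⟩
    · calc V * Uᵀ * (V * Uᵀ)ᵀ = V * (Uᵀ * U) * Vᵀ := by
            simp only [Matrix.transpose_mul, Matrix.transpose_transpose, Matrix.mul_assoc]
        _ = 1 := by rw [hU2, Matrix.mul_one, hV1]
    · calc (V * Uᵀ)ᵀ * (V * Uᵀ) = U * (Vᵀ * V) * Uᵀ := by
            simp only [Matrix.transpose_mul, Matrix.transpose_transpose, Matrix.mul_assoc]
        _ = 1 := by rw [hV2, Matrix.mul_one, hU1]
    · rw [hP₀, hV3]
      calc V * EE r (d - r) * Vᵀ = V * (Uᵀ * U) * EE r (d - r) * (Uᵀ * U) * Vᵀ := by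
            rw [hU2, Matrix.mul_one, Matrix.mul_one]
        _ = _ := by
            simp only [Matrix.transpose_mul, Matrix.transpose_transpose, Matrix.mul_assoc]
  refine (negLog_anti (measure_mono (QS_subset hSig hε)) (measure_ne_top _ _)).trans ?_
  exact core_all hd hU1 hU2 hP₀ μ hμ hμE hSig hε


end
end

section
/- Eigenvalue Bound for Projected Metric Tensor (Lemma). Let Σ be a p×p real positive semidefinite matrix with eigenvalues λ_1 ≥ … ≥ λ_p listed in nonincreasing order (with multiplicity), let 1 ≤ r ≤ p, let V ⊆ ℝ^p be an r-dimensional subspace spanned by orthonormal eigenvectors of Σ corresponding to λ_1,…,λ_r, and let V̄ ⊆ ℝ^p be any r-dimensional subspace, with orthogonal projection matrices P_V and P_V̄. Then for every k = 1,…,r, the k-th largest eigenvalue of P_V̄·Σ·P_V̄ satisfies λ_k ≥ λ_k(P_V̄·Σ·P_V̄) ≥ λ_k/2 − ‖Σ^{1/2}(P_V − P_V̄)‖_op². -/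
open scoped Matrix MatrixOrder

noncomputable section

theorem eigDesc_antitone {m : ℕ} (G : Matrix (Fin m) (Fin m) ℝ) : Antitone (eigDesc G) := by
  unfold eigDesc
  split_ifs with h
  · intro a b hab
    exact Tuple.monotone_sort h.eigenvalues (Fin.rev_le_rev.mpr hab)
  · exact antitone_const

theorem eigDesc_nonneg {m : ℕ} (G : Matrix (Fin m) (Fin m) ℝ) (hG : G.PosSemidef) (k : Fin m) :
    0 ≤ eigDesc G k := by
  unfold eigDesc
  rw [dif_pos hG.isHermitian]
  exact hG.eigenvalues_nonneg _

theorem exists_eigbasis {m : ℕ} (G : Matrix (Fin m) (Fin m) ℝ) (hG : G.IsHermitian) :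
    ∃ w : Fin m → Fin m → ℝ,
      (∀ k l, (w k) ⬝ᵥ (w l) = if k = l then (1 : ℝ) else 0) ∧
      (∀ k, G.mulVec (w k) = eigDesc G k • w k) ∧
      (∀ x : Fin m → ℝ, x = ∑ i, (w i ⬝ᵥ x) • w i) := by
  let e : Fin m ≃ Fin m := Fin.revPerm.trans (Tuple.sort hG.eigenvalues)
  let b := hG.eigenvectorBasis.reindex e.symm
  have hb : ∀ k, b k = hG.eigenvectorBasis (e k) := fun k => by simp [b]
  have hin : ∀ x y : EuclideanSpace ℝ (Fin m), inner ℝ x y = x.ofLp ⬝ᵥ y.ofLp := by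
    intro x y
    rw [EuclideanSpace.inner_eq_star_dotProduct, dotProduct_comm]
    simp
  refine ⟨fun k => (b k).ofLp, ?_, ?_, ?_⟩
  · intro k l
    rw [← hin]
    exact orthonormal_iff_ite.mp b.orthonormal k l
  · intro k
    have := hG.mulVec_eigenvectorBasis (e k)
    simp only [hb]
    rw [this]
    unfold eigDesc
    rw [dif_pos hG]
    rfl
  · intro x
    have := b.sum_repr' (WithLp.toLp 2 x)
    have h2 := congrArg (fun z : EuclideanSpace ℝ (Fin m) => z.ofLp) this
    simp only [hin, WithLp.ofLp_sum, WithLp.ofLp_smul] at h2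
    exact h2.symm

theorem ortho_dot {p n : ℕ} (w : Fin n → Fin p → ℝ)
    (hw : ∀ k l, (w k) ⬝ᵥ (w l) = if k = l then (1 : ℝ) else 0) (c d : Fin n → ℝ) :
    (∑ i, c i • w i) ⬝ᵥ (∑ i, d i • w i) = ∑ i, c i * d i := by
  rw [sum_dotProduct]
  refine Finset.sum_congr rfl fun i _ => ?_
  rw [dotProduct_sum, Finset.sum_eq_single i]
  · simp [hw, mul_comm]
  · intro j _ hj
    simp [hw, hj.symm]
  · simp

theorem ortho_quad {p n : ℕ} (G : Matrix (Fin p) (Fin p) ℝ) (w : Fin n → Fin p → ℝ)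
    (hw : ∀ k l, (w k) ⬝ᵥ (w l) = if k = l then (1 : ℝ) else 0) (l : Fin n → ℝ)
    (he : ∀ k, G.mulVec (w k) = l k • w k) (c : Fin n → ℝ) :
    (∑ i, c i • w i) ⬝ᵥ (G.mulVec (∑ i, c i • w i)) = ∑ i, l i * c i ^ 2 := by
  have : G.mulVec (∑ i, c i • w i) = ∑ i, (c i * l i) • w i := by
    rw [Matrix.mulVec_sum]
    refine Finset.sum_congr rfl fun i _ => ?_
    rw [Matrix.mulVec_smul, he, smul_smul]
  rw [this, ortho_dot w hw]
  exact Finset.sum_congr rfl fun i _ => by ring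

theorem key_upper {p : ℕ} (G : Matrix (Fin p) (Fin p) ℝ) (hG : G.IsHermitian) (k : Fin p)
    (T : (Fin (k.val + 1) → ℝ) →ₗ[ℝ] (Fin p → ℝ)) :
    ∃ c : Fin (k.val + 1) → ℝ, c ≠ 0 ∧
      T c ⬝ᵥ G.mulVec (T c) ≤ eigDesc G k * (T c ⬝ᵥ T c) := by
  obtain ⟨w, hw, he, hx⟩ := exists_eigbasis G hG
  let F : (Fin (k.val + 1) → ℝ) →ₗ[ℝ] (Fin k.val → ℝ) :=
    LinearMap.pi fun i => (dotProductBilin ℝ ℝ (w (Fin.castLE k.isLt.le i))).comp T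
  have hF : LinearMap.ker F ≠ ⊥ := LinearMap.ker_ne_bot_of_finrank_lt (by simp)
  obtain ⟨c, hc, hc0⟩ := (Submodule.ne_bot_iff _).mp hF
  refine ⟨c, hc0, ?_⟩
  have hz : ∀ i : Fin p, i < k → w i ⬝ᵥ T c = 0 := by
    intro i hi
    exact congrFun (LinearMap.mem_ker.mp hc) ⟨i.val, hi⟩
  have h1 := ortho_quad G w hw _ he (fun i => w i ⬝ᵥ T c)
  have h2 := ortho_dot w hw (fun i => w i ⬝ᵥ T c) (fun i => w i ⬝ᵥ T c)
  rw [← hx] at h1 h2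
  rw [h1, h2, Finset.mul_sum]
  refine Finset.sum_le_sum fun i _ => ?_
  by_cases hi : i < k
  · simp [hz i hi]
  · rw [← sq]
    exact mul_le_mul_of_nonneg_right (eigDesc_antitone G (not_lt.mp hi)) (sq_nonneg _)

/-- linear combination map -/
def combo {p n : ℕ} (w : Fin n → Fin p → ℝ) : (Fin n → ℝ) →ₗ[ℝ] (Fin p → ℝ) :=
  Fintype.linearCombination ℝ w

theorem combo_apply {p n : ℕ} (w : Fin n → Fin p → ℝ) (c : Fin n → ℝ) :
    combo w c = ∑ i, c i • w i := rfl

theorem quad_lower {p n : ℕ} (G : Matrix (Fin p) (Fin p) ℝ) (w : Fin n → Fin p → ℝ)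
    (hw : ∀ k l, (w k) ⬝ᵥ (w l) = if k = l then (1 : ℝ) else 0) (l : Fin n → ℝ)
    (he : ∀ k, G.mulVec (w k) = l k • w k) (t : ℝ) (ht : ∀ i, t ≤ l i) (c : Fin n → ℝ) :
    t * (combo w c ⬝ᵥ combo w c) ≤ combo w c ⬝ᵥ G.mulVec (combo w c) := by
  rw [combo_apply, ortho_quad G w hw l he, ortho_dot w hw, Finset.mul_sum]
  refine Finset.sum_le_sum fun i _ => ?_
  rw [← sq]
  exact mul_le_mul_of_nonneg_right (ht i) (sq_nonneg _)

theorem combo_pos {p n : ℕ} (w : Fin n → Fin p → ℝ)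
    (hw : ∀ k l, (w k) ⬝ᵥ (w l) = if k = l then (1 : ℝ) else 0) (c : Fin n → ℝ) (hc : c ≠ 0) :
    0 < combo w c ⬝ᵥ combo w c := by
  rw [combo_apply, ortho_dot w hw]
  obtain ⟨i, hi⟩ := Function.ne_iff.mp hc
  exact Finset.sum_pos' (fun i _ => mul_self_nonneg _)
    ⟨i, Finset.mem_univ _, mul_self_pos.mpr hi⟩

theorem gramProj_mulVec {p r : ℕ} (u : Fin r → Fin p → ℝ) (x : Fin p → ℝ) :
    (gramProj u).mulVec x = ∑ k, (u k ⬝ᵥ x) • u k := by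
  ext i
  simp only [gramProj, Matrix.mulVec, dotProduct, Matrix.of_apply, Finset.sum_apply, Pi.smul_apply,
    smul_eq_mul, Finset.sum_mul]
  rw [Finset.sum_comm]
  exact Finset.sum_congr rfl fun i _ => Finset.sum_congr rfl fun j _ => by ring

theorem gramProj_transpose {p r : ℕ} (u : Fin r → Fin p → ℝ) : (gramProj u)ᵀ = gramProj u := by
  ext i j
  simp [gramProj, mul_comm]

theorem gramProj_contract {p r : ℕ} (u : Fin r → Fin p → ℝ)
    (hu : ∀ k l, (u k) ⬝ᵥ (u l) = if k = l then (1 : ℝ) else 0) (x : Fin p → ℝ) :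
    (gramProj u).mulVec x ⬝ᵥ (gramProj u).mulVec x ≤ x ⬝ᵥ x := by
  set y := (gramProj u).mulVec x with hy
  have h1 : y ⬝ᵥ y = x ⬝ᵥ y := by
    rw [hy, gramProj_mulVec, ortho_dot u hu, dotProduct_sum]
    exact Finset.sum_congr rfl fun i _ => by rw [dotProduct_smul, dotProduct_comm x, smul_eq_mul]
  have h2 : 0 ≤ (x - y) ⬝ᵥ (x - y) := by
    exact Finset.sum_nonneg fun i _ => mul_self_nonneg _
  rw [sub_dotProduct, dotProduct_sub, dotProduct_sub, dotProduct_comm y x] at h2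
  linarith

theorem sandwich_quad {p : ℕ} (Q G : Matrix (Fin p) (Fin p) ℝ) (hQ : Qᵀ = Q) (x : Fin p → ℝ) :
    x ⬝ᵥ (Q * G * Q).mulVec x = Q.mulVec x ⬝ᵥ G.mulVec (Q.mulVec x) := by
  rw [← Matrix.mulVec_mulVec, ← Matrix.mulVec_mulVec, Matrix.dotProduct_mulVec,
    ← Matrix.mulVec_transpose, hQ]

theorem opNorm_bound {p : ℕ} (M : Matrix (Fin p) (Fin p) ℝ) (x : Fin p → ℝ) :
    M.mulVec x ⬝ᵥ M.mulVec x ≤ opNorm M ^ 2 * (x ⬝ᵥ x) := by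
  have hbdd : BddAbove {t | ∃ x : Fin p → ℝ, (∑ j, x j ^ 2) ≤ 1 ∧
      t = Real.sqrt (∑ i, (M.mulVec x i) ^ 2)} := by
    refine ⟨Real.sqrt (∑ i, ∑ j, M i j ^ 2), ?_⟩
    rintro t ⟨x, hx, rfl⟩
    refine Real.sqrt_le_sqrt (Finset.sum_le_sum fun i _ => ?_)
    have := Finset.sum_mul_sq_le_sq_mul_sq Finset.univ (M i) x
    refine this.trans ?_
    exact mul_le_of_le_one_right (Finset.sum_nonneg fun _ _ => sq_nonneg _) hx
  have hsq : ∀ y : Fin p → ℝ, y ⬝ᵥ y = ∑ i, y i ^ 2 := fun y =>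
    Finset.sum_congr rfl fun i _ => (sq _).symm
  have hnn : 0 ≤ x ⬝ᵥ x := by rw [hsq]; exact Finset.sum_nonneg fun _ _ => sq_nonneg _
  rcases hnn.eq_or_lt with h0 | hpos
  · have : x = 0 := dotProduct_self_eq_zero.mp h0.symm
    simp [this]
  · set s := Real.sqrt (x ⬝ᵥ x) with hs
    have hs2 : s ^ 2 = x ⬝ᵥ x := Real.sq_sqrt hnn
    have hspos : 0 < s := Real.sqrt_pos.mpr hpos
    have hle : Real.sqrt (∑ i, (M.mulVec (s⁻¹ • x) i) ^ 2) ≤ opNorm M := by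
      refine le_csSup hbdd ⟨s⁻¹ • x, ?_, rfl⟩
      rw [← hsq, smul_dotProduct, dotProduct_smul, ← hs2, smul_eq_mul, smul_eq_mul]
      apply le_of_eq
      field_simp
    rw [← hsq, Matrix.mulVec_smul, smul_dotProduct, dotProduct_smul, smul_eq_mul, smul_eq_mul]
      at hle
    have h3 := (Real.sqrt_le_left ((Real.sqrt_nonneg _).trans hle)).mp hle
    rw [← hs2]
    calc M.mulVec x ⬝ᵥ M.mulVec x
        = (s⁻¹ * (s⁻¹ * (M.mulVec x ⬝ᵥ M.mulVec x))) * s ^ 2 := by field_simp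
      _ ≤ _ := mul_le_mul_of_nonneg_right h3 (sq_nonneg _)

theorem sqrt_quad {p : ℕ} (G : Matrix (Fin p) (Fin p) ℝ) (hG : G.PosSemidef) (x : Fin p → ℝ) :
    x ⬝ᵥ G.mulVec x = (CFC.sqrt G).mulVec x ⬝ᵥ (CFC.sqrt G).mulVec x := by
  have h0 : 0 ≤ G := Matrix.nonneg_iff_posSemidef.mpr hG
  have h1 : CFC.sqrt G * CFC.sqrt G = G := CFC.sqrt_mul_sqrt_self G h0
  have h2 : (CFC.sqrt G)ᵀ = CFC.sqrt G := by
    have := (Matrix.nonneg_iff_posSemidef.mp (CFC.sqrt_nonneg G)).isHermitian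
    simpa [Matrix.IsHermitian, Matrix.conjTranspose_eq_transpose_of_trivial] using this
  have h3 := sandwich_quad (CFC.sqrt G) 1 h2 x
  rw [mul_one, h1, Matrix.one_mulVec] at h3
  exact h3

/-- **Eigenvalue Bound for Projected Metric Tensor (Lemma).** -/
theorem eigenvalue_bound_for_projected_metric_tensor
    (p r : ℕ) (hr : 1 ≤ r) (hrp : r ≤ p)
    (Sig : Matrix (Fin p) (Fin p) ℝ) (hSig : Sig.PosSemidef)
    -- `V` is spanned by orthonormal eigenvectors of `Sig` corresponding to `λ_1,…,λ_r`
    (u : Fin r → Fin p → ℝ)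
    (hu : ∀ k l, (u k) ⬝ᵥ (u l) = if k = l then (1 : ℝ) else 0)
    (hue : ∀ k : Fin r, Sig.mulVec (u k) = eigDesc Sig (Fin.castLE hrp k) • u k)
    -- `V̄` is an arbitrary `r`-dimensional subspace, given by an orthonormal family
    (v : Fin r → Fin p → ℝ)
    (hv : ∀ k l, (v k) ⬝ᵥ (v l) = if k = l then (1 : ℝ) else 0) :
    ∀ k : Fin r,
      eigDesc (gramProj v * Sig * gramProj v) (Fin.castLE hrp k) ≤
          eigDesc Sig (Fin.castLE hrp k) ∧
        eigDesc Sig (Fin.castLE hrp k) / 2 -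
            opNorm (CFC.sqrt Sig * (gramProj u - gramProj v)) ^ 2 ≤
          eigDesc (gramProj v * Sig * gramProj v) (Fin.castLE hrp k) := by
  intro k
  set Q := gramProj v with hQ
  have hQt : Qᵀ = Q := gramProj_transpose v
  have hB : (Q * Sig * Q).IsHermitian := by
    have hS : Sigᵀ = Sig := by
      simpa [Matrix.IsHermitian, Matrix.conjTranspose_eq_transpose_of_trivial]
        using hSig.isHermitian
    rw [Matrix.IsHermitian, Matrix.conjTranspose_eq_transpose_of_trivial, Matrix.transpose_mul,
      Matrix.transpose_mul, hQt, hS, mul_assoc]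
  set K : Fin p := Fin.castLE hrp k with hK
  constructor
  · obtain ⟨w, hw, he, -⟩ := exists_eigbasis _ hB
    let w' : Fin (K.val + 1) → Fin p → ℝ := fun i => w (Fin.castLE K.isLt i)
    have hw' : ∀ k l, (w' k) ⬝ᵥ (w' l) = if k = l then (1 : ℝ) else 0 := by
      intro a b
      simp only [w', hw, (Fin.castLE_injective _).eq_iff]
    obtain ⟨c, hc, hle⟩ := key_upper Sig hSig.isHermitian K (Q.mulVecLin.comp (combo w'))
    have hlow := quad_lower (Q * Sig * Q) w' hw' _ (fun i => he _)
      (eigDesc (Q * Sig * Q) K)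
      (fun i => eigDesc_antitone _ (Fin.le_def.mpr (Nat.lt_succ_iff.mp i.isLt))) c
    have hpos := combo_pos w' hw' c hc
    simp only [LinearMap.comp_apply, Matrix.mulVecLin_apply] at hle
    rw [sandwich_quad Q Sig hQt] at hlow
    have hcon := mul_le_mul_of_nonneg_left (gramProj_contract v hv (combo w' c))
      (eigDesc_nonneg Sig hSig K)
    exact le_of_mul_le_mul_right (hlow.trans (hle.trans hcon)) hpos
  · let u' : Fin (K.val + 1) → Fin p → ℝ := fun i => u (Fin.castLE k.isLt i)
    have hu' : ∀ k l, (u' k) ⬝ᵥ (u' l) = if k = l then (1 : ℝ) else 0 := by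
      intro a b
      simp only [u', hu, (Fin.castLE_injective _).eq_iff]
    obtain ⟨c, hc, hle⟩ := key_upper (Q * Sig * Q) hB K (combo u')
    have hlow := quad_lower Sig u' hu' _ (fun i => hue _) (eigDesc Sig K)
      (fun i => eigDesc_antitone _ (Fin.le_def.mpr (Nat.lt_succ_iff.mp i.isLt))) c
    have hpos := combo_pos u' hu' c hc
    have hP : (gramProj u).mulVec (combo u' c) = combo u' c := by
      rw [combo_apply, Matrix.mulVec_sum]
      refine Finset.sum_congr rfl fun i _ => ?_
      rw [Matrix.mulVec_smul, gramProj_mulVec]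
      congr 1
      simp only [u', hu, ite_smul, one_smul, zero_smul, Finset.sum_ite_eq', Finset.mem_univ, if_true]
    set x := combo u' c with hx
    have hop := opNorm_bound (CFC.sqrt Sig * (gramProj u - Q)) x
    rw [sandwich_quad Q Sig hQt, sqrt_quad Sig hSig] at hle
    rw [sqrt_quad Sig hSig] at hlow
    rw [← Matrix.mulVec_mulVec, Matrix.sub_mulVec, hP, Matrix.mulVec_sub] at hop
    set a := (CFC.sqrt Sig).mulVec x
    set b := (CFC.sqrt Sig).mulVec (Q.mulVec x)
    have hab : 0 ≤ (a - (2 : ℝ) • b) ⬝ᵥ (a - (2 : ℝ) • b) :=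
      Finset.sum_nonneg fun i _ => mul_self_nonneg _
    simp only [sub_dotProduct, dotProduct_sub, smul_dotProduct, dotProduct_smul, smul_eq_mul,
      dotProduct_comm b a] at hab hop
    refine le_of_mul_le_mul_right ?_ hpos
    linarith

end
end
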